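/- Mean-square convergence of RMSProp: lim_{n→∞} E[‖∇g(θ_n)‖²] = 0. -/

import Mathlib

open MeasureTheory Filter

/-- Second-order Taylor bound for a function with Lipschitz gradient. -/
theorem abs_sub_sub_inner_gradient_le {E : Type*} [NormedAddCommGroup E] [InnerProductSpace ℝ E]
    [CompleteSpace E] {g : E → ℝ} {L : ℝ} (hL : 0 ≤ L) (hd : Differentiable ℝ g)
    (hs : ∀ x y, ‖gradient g x - gradient g y‖ ≤ L * ‖x - y‖) (x y : E) :
    |g y - g x - inner ℝ (gradient g x) (y - x)| ≤ L * ‖y - x‖ ^ 2 := by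
  have key := (convex_closedBall x ‖y - x‖).norm_image_sub_le_of_norm_fderiv_le' (𝕜 := ℝ) (f := g)
    (φ := fderiv ℝ g x) (C := L * ‖y - x‖) (x := x) (y := y) (fun z _ => hd z) (fun z hz => by
      rw [← toDual_gradient, ← toDual_gradient, ← map_sub, LinearIsometryEquiv.norm_map]
      refine (hs z x).trans (mul_le_mul_of_nonneg_left ?_ hL)
      simpa [dist_eq_norm] using hz)
    (by simp) (by simp [dist_eq_norm])
  rw [inner_gradient_left]
  simpa [Real.norm_eq_abs, pow_two, mul_assoc] using key

theorem norm_gradient_sq_le {E : Type*} [NormedAddCommGroup E] [InnerProductSpace ℝ E]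
    [CompleteSpace E] {g : E → ℝ} {L : ℝ} (hL : 0 < L) (hd : Differentiable ℝ g)
    (h0 : ∀ x, 0 ≤ g x)
    (hs : ∀ x y, ‖gradient g x - gradient g y‖ ≤ L * ‖x - y‖) (x : E) :
    ‖gradient g x‖ ^ 2 ≤ 4 * L * g x := by
  have h := (abs_le.1 (abs_sub_sub_inner_gradient_le hL.le hd hs x
    (x - (1 / (2 * L)) • gradient g x))).2
  have h1 := h0 (x - (1 / (2 * L)) • gradient g x)
  simp only [sub_sub_cancel_left, inner_neg_right, inner_smul_right, norm_neg, norm_smul,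
    real_inner_self_eq_norm_sq, Real.norm_eq_abs, mul_pow, sq_abs] at h
  have e : L * ((1 / (2 * L)) ^ 2 * ‖gradient g x‖ ^ 2) = ‖gradient g x‖ ^ 2 / (4 * L) := by
    field_simp; ring
  have e2 : 1 / (2 * L) * ‖gradient g x‖ ^ 2 = 2 * (‖gradient g x‖ ^ 2 / (4 * L)) := by
    field_simp; ring
  rw [e, e2] at h
  have : ‖gradient g x‖ ^ 2 / (4 * L) ≤ g x := by linarith
  rw [div_le_iff₀ (by positivity)] at this
  linarith

theorem continuous_of_norm_sub_le {E F : Type*} [NormedAddCommGroup E] [NormedAddCommGroup F]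
    {f : E → F} {L : ℝ} (hs : ∀ x y, ‖f x - f y‖ ≤ L * ‖x - y‖) : Continuous f :=
  (LipschitzWith.of_dist_le_mul (K := L.toNNReal) fun x y => by
    rw [dist_eq_norm, dist_eq_norm]
    exact (hs x y).trans (mul_le_mul_of_nonneg_right (Real.le_coe_toNNReal L)
      (norm_nonneg _))).continuous

theorem isBounded_sublevel {E : Type*} [NormedAddCommGroup E] {g : E → ℝ}
    (hc : Tendsto g (Bornology.cobounded E) atTop) (R : ℝ) :
    Bornology.IsBounded {x | g x ≤ R} := by
  have := hc.eventually (eventually_gt_atTop R)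
  rw [← Bornology.isCobounded_compl_iff]
  filter_upwards [this] with x hx
  simpa using hx

theorem exists_pos_le_norm_gradient {E : Type*} [NormedAddCommGroup E] [InnerProductSpace ℝ E]
    [ProperSpace E] {g : E → ℝ} (hg : Continuous g) (hgr : Continuous (gradient g))
    (hc : Tendsto g (Bornology.cobounded E) atTop) {a b : ℝ}
    (hcrit : ∀ x, gradient g x = 0 → g x ∉ Set.Icc a b) :
    ∃ ν > 0, ∀ x, g x ∈ Set.Icc a b → ν ≤ ‖gradient g x‖ := by
  have hK : IsCompact (g ⁻¹' Set.Icc a b) :=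
    Metric.isCompact_of_isClosed_isBounded (isClosed_Icc.preimage hg)
      ((isBounded_sublevel hc b).subset fun x hx => hx.2)
  rcases (g ⁻¹' Set.Icc a b).eq_empty_or_nonempty with h | h
  · exact ⟨1, one_pos, fun x hx => absurd (show x ∈ g ⁻¹' Set.Icc a b from hx) (by simp [h])⟩
  · obtain ⟨y, hy, hmin⟩ := hK.exists_isMinOn h hgr.norm.continuousOn
    refine ⟨‖gradient g y‖, ?_, fun x hx => hmin hx⟩
    exact norm_pos_iff.2 fun h0 => hcrit y h0 hy

theorem exists_abs_sum_Ico_lt {F : Type*} [NormedAddCommGroup F] {q : ℕ → F}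
    (hq : CauchySeq fun n => ∑ k ∈ Finset.range n, q k) {η : ℝ} (hη : 0 < η) :
    ∃ N, ∀ s t, N ≤ s → s ≤ t → ‖∑ k ∈ Finset.Ico s t, q k‖ < η := by
  obtain ⟨N, hN⟩ := Metric.cauchySeq_iff.1 hq η hη
  refine ⟨N, fun s t hs hst => ?_⟩
  have := hN t (hs.trans hst) s hs
  rwa [dist_eq_norm, ← Finset.sum_Ico_eq_sub _ hst] at this

section Pathwise

variable {E : Type*} [NormedAddCommGroup E] [InnerProductSpace ℝ E] [ProperSpace E]
  {g : E → ℝ} {L : ℝ} {x : ℕ → E} {a : ℕ → ℝ}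

/-- A trajectory which, at points of bounded height and non-small gradient, performs a gradient step
of size comparable to `a k` up to a convergent perturbation. -/
def IsPerturbedDescent (g : E → ℝ) (a : ℕ → ℝ) (x : ℕ → E) : Prop :=
  ∀ R ν : ℝ, 0 < ν → ∃ (p : ℕ → E) (q : ℕ → ℝ) (c C : ℝ), 0 < c ∧ 0 < C ∧
    CauchySeq (fun n => ∑ k ∈ Finset.range n, p k) ∧
    CauchySeq (fun n => ∑ k ∈ Finset.range n, q k) ∧
    ∀ k, g (x k) ≤ R → ν ≤ ‖gradient g (x k)‖ →
      g (x (k + 1)) ≤ g (x k) - c * (a k * ‖gradient g (x k)‖ ^ 2) + q k ∧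
      ‖x (k + 1) - x k - p k‖ ≤ C * (a k * ‖gradient g (x k)‖)

theorem IsPerturbedDescent.not_upcrossing (hx : IsPerturbedDescent g a x) (ha : ∀ k, 0 ≤ a k)
    (hL : 0 < L) (hd : Differentiable ℝ g) (h0 : ∀ x, 0 ≤ g x)
    (hs : ∀ x y, ‖gradient g x - gradient g y‖ ≤ L * ‖x - y‖)
    (hc : Tendsto g (Bornology.cobounded E) atTop)
    (hstep : ∀ R η : ℝ, 0 < η → ∀ᶠ k in atTop, g (x k) ≤ R → ‖x (k + 1) - x k‖ ≤ η)
    {l u : ℝ} (hlu : l < u) (hcrit : ∀ x, gradient g x = 0 → g x ∉ Set.Icc l u) :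
    ¬ ((∃ᶠ k in atTop, g (x k) < l) ∧ ∃ᶠ k in atTop, u < g (x k)) := by
  rintro ⟨hl, hu⟩
  obtain ⟨ν, hν, hgrad⟩ := exists_pos_le_norm_gradient hd.continuous
    (continuous_of_norm_sub_le hs) hc hcrit
  obtain ⟨p, q, c, C, hc0, -, -, hq, hdesc⟩ := hx u ν hν
  have he : 0 < (u - l) / 3 := by linarith
  obtain ⟨N₁, hN₁⟩ := exists_abs_sum_Ico_lt hq he
  have hjump : ∀ᶠ k in atTop, g (x k) ≤ u → g (x (k + 1)) ≤ g (x k) + (u - l) / 3 := by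
    set M := √(4 * L * u) + L with hM
    have hM0 : 0 < M := by positivity
    filter_upwards [hstep u (min 1 ((u - l) / 3 / M)) (by positivity)] with k hk hku
    have h1 := hk hku
    have h2 := h1.trans (min_le_left _ _)
    have h3 := h1.trans (min_le_right _ _)
    have h4 := (abs_le.1 (abs_sub_sub_inner_gradient_le hL.le hd hs (x k) (x (k + 1)))).2
    have h5 := real_inner_le_norm (gradient g (x k)) (x (k + 1) - x k)
    have h6 : ‖gradient g (x k)‖ ≤ √(4 * L * u) := by
      apply Real.le_sqrt_of_sq_le
      refine (norm_gradient_sq_le hL hd h0 hs (x k)).trans ?_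
      gcongr
    have h7 : ‖x (k + 1) - x k‖ ^ 2 ≤ ‖x (k + 1) - x k‖ := by
      nlinarith [norm_nonneg (x (k + 1) - x k)]
    rw [le_div_iff₀ hM0] at h3
    nlinarith [norm_nonneg (x (k + 1) - x k), mul_le_mul_of_nonneg_right h6
      (norm_nonneg (x (k + 1) - x k)), mul_le_mul_of_nonneg_left h7 hL.le]
  obtain ⟨N₂, hN₂⟩ := eventually_atTop.1 hjump
  obtain ⟨s₀, hs₀, hs₀l⟩ := frequently_atTop.1 hl (max N₁ N₂)
  obtain ⟨t, ht, htu⟩ := frequently_atTop.1 hu s₀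
  have hN1 := (le_max_left N₁ N₂).trans hs₀
  have hN2 := (le_max_right N₁ N₂).trans hs₀
  have hstart : ∀ n, s₀ ≤ n → g (x n) < l ∨ ∃ s, s₀ ≤ s ∧ s ≤ n ∧ g (x s) ≤ l + (u - l) / 3 ∧
      g (x n) ≤ g (x s) + ∑ k ∈ Finset.Ico s n, q k := by
    intro n hn
    induction n, hn using Nat.le_induction with
    | base => exact Or.inl hs₀l
    | succ n hn ih =>
      have hlow : g (x n) < l → g (x (n + 1)) ≤ l + (u - l) / 3 := fun h => by
        have := hN₂ n (hN2.trans hn) (by linarith)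
        linarith
      by_cases hnl : g (x n) < l
      · exact Or.inr ⟨n + 1, by omega, le_rfl, hlow hnl, by simp⟩
      · obtain h | ⟨s, h1, h2, h3, h4⟩ := ih
        · exact absurd h hnl
        · have h5 := (abs_lt.1 (hN₁ s n (hN1.trans h1) h2)).2
          have h6 : g (x n) ≤ u := by linarith
          have h7 := (hdesc n h6 (hgrad _ ⟨not_lt.1 hnl, h6⟩)).1
          refine Or.inr ⟨s, h1, by omega, h3, ?_⟩
          rw [Finset.sum_Ico_succ_top h2]
          have : 0 ≤ c * (a n * ‖gradient g (x n)‖ ^ 2) :=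
            mul_nonneg hc0.le (mul_nonneg (ha n) (sq_nonneg _))
          linarith
  obtain h | ⟨s, h1, h2, h3, h4⟩ := hstart t ht
  · linarith
  · have h5 := (abs_lt.1 (hN₁ s t (hN1.trans h1) h2)).2
    linarith

theorem exists_Icc_subset_compl_of_interior_closure_eq_empty {s : Set ℝ}
    (hs : interior (closure s) = ∅) {a b : ℝ} (hab : a < b) :
    ∃ l u, a < l ∧ l < u ∧ u < b ∧ Set.Icc l u ⊆ sᶜ := by
  have hne : (Set.Ioo a b ∩ (closure s)ᶜ).Nonempty := by
    by_contra h
    rw [Set.not_nonempty_iff_eq_empty, ← Set.sdiff_eq, Set.sdiff_eq_empty] at h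
    have := interior_maximal h isOpen_Ioo
    rw [hs] at this
    exact (Set.nonempty_Ioo.2 hab).not_subset_empty this
  obtain ⟨z, hz⟩ := hne
  obtain ⟨r, hr, hball⟩ := Metric.isOpen_iff.1
    (isOpen_Ioo.inter isClosed_closure.isOpen_compl) z hz
  have hsub : Set.Icc (z - r / 2) (z + r / 2) ⊆ Metric.ball z r := by
    rw [← Real.closedBall_eq_Icc]
    exact Metric.closedBall_subset_ball (by linarith)
  refine ⟨z - r / 2, z + r / 2, ?_, by linarith, ?_, fun y hy h => ?_⟩
  · exact (hball (hsub ⟨le_rfl, by linarith⟩)).1.1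
  · exact (hball (hsub ⟨by linarith, le_rfl⟩)).1.2
  · exact (hball (hsub hy)).2 (subset_closure h)

theorem IsPerturbedDescent.exists_tendsto (hx : IsPerturbedDescent g a x) (ha : ∀ k, 0 ≤ a k)
    (hL : 0 < L) (hd : Differentiable ℝ g) (h0 : ∀ x, 0 ≤ g x)
    (hs : ∀ x y, ‖gradient g x - gradient g y‖ ≤ L * ‖x - y‖)
    (hc : Tendsto g (Bornology.cobounded E) atTop)
    (hstep : ∀ R η : ℝ, 0 < η → ∀ᶠ k in atTop, g (x k) ≤ R → ‖x (k + 1) - x k‖ ≤ η)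
    (hsard : interior (closure {y : ℝ | ∃ x, gradient g x = 0 ∧ g x = y}) = ∅)
    {B : ℝ} (hB : ∃ᶠ k in atTop, g (x k) ≤ B) :
    ∃ ℓ, Tendsto (fun k => g (x k)) atTop (nhds ℓ) := by
  have main : ∀ b c : ℝ, b < c →
      ¬ ((∃ᶠ k in atTop, g (x k) < b) ∧ ∃ᶠ k in atTop, c < g (x k)) := by
    rintro b c hbc ⟨h1, h2⟩
    obtain ⟨l, u, hl, hlu, hu, hsub⟩ :=
      exists_Icc_subset_compl_of_interior_closure_eq_empty hsard hbc
    exact hx.not_upcrossing ha hL hd h0 hs hc hstep hlu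
      (fun y hy hmem => hsub hmem ⟨y, hy, rfl⟩)
      ⟨h1.mono fun k hk => hk.trans hl, h2.mono fun k hk => hu.trans hk⟩
  refine tendsto_of_no_upcrossings dense_univ (fun b _ c _ => main b c) ?_ ?_
  · refine ⟨B + 2, ?_⟩
    have := main (B + 1) (B + 2) (by linarith)
    rw [not_and] at this
    have := this (hB.mono fun k hk => by linarith)
    rw [eventually_map]
    filter_upwards [not_frequently.1 this] with k hk
    exact not_lt.1 hk
  · exact ⟨0, by rw [eventually_map]; exact Eventually.of_forall fun k => h0 _⟩

theorem IsPerturbedDescent.tendsto_gradient (hx : IsPerturbedDescent g a x) (ha : ∀ k, 0 ≤ a k)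
    (ha' : ¬ Summable a) (hL : 0 < L) (h0 : ∀ x, 0 ≤ g x)
    (hs : ∀ x y, ‖gradient g x - gradient g y‖ ≤ L * ‖x - y‖)
    {ℓ : ℝ} (hℓ : Tendsto (fun k => g (x k)) atTop (nhds ℓ)) :
    Tendsto (fun k => gradient g (x k)) atTop (nhds 0) := by
  by_contra hcon
  obtain ⟨ν, hν, hfreq⟩ : ∃ ν > 0, ∃ᶠ k in atTop, 2 * ν ≤ ‖gradient g (x k)‖ := by
    rw [Metric.tendsto_nhds] at hcon
    push Not at hcon
    obtain ⟨e, he, hf⟩ := hcon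
    exact ⟨e / 2, by positivity, hf.mono fun k hk => by
      rw [dist_zero_right] at hk; linarith⟩
  obtain ⟨p, q, c, C, hc0, hC0, hp, hq, hdesc⟩ := hx (ℓ + 1) ν hν
  set D := ν ^ 2 / (2 * L * C) with hD
  have hD0 : 0 < D := by positivity
  obtain ⟨N₁, hN₁⟩ := exists_abs_sum_Ico_lt hp (show 0 < ν / (2 * L) by positivity)
  obtain ⟨N₂, hN₂⟩ := exists_abs_sum_Ico_lt hq (show 0 < c * D / 4 by positivity)
  obtain ⟨N₃, hN₃⟩ := Metric.cauchySeq_iff.1 hℓ.cauchySeq (c * D / 4) (by positivity)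
  obtain ⟨N₄, hN₄⟩ := eventually_atTop.1
    (hℓ.eventually (eventually_le_nhds (show ℓ < ℓ + 1 by linarith)))
  obtain ⟨k, hk, hkν⟩ := frequently_atTop.1 hfreq (max (max N₁ N₂) (max N₃ N₄))
  simp only [max_le_iff] at hk
  obtain ⟨⟨hk1, hk2⟩, hk3, hk4⟩ := hk
  have run : ∀ n, k ≤ n → (∀ j, k ≤ j → j < n → ν ≤ ‖gradient g (x j)‖) →
      g (x n) ≤ g (x k) - c * ∑ j ∈ Finset.Ico k n, a j * ‖gradient g (x j)‖ ^ 2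
        + ∑ j ∈ Finset.Ico k n, q j ∧
      ‖x n - x k - ∑ j ∈ Finset.Ico k n, p j‖ ≤
        C * ∑ j ∈ Finset.Ico k n, a j * ‖gradient g (x j)‖ := by
    intro n hn
    induction n, hn using Nat.le_induction with
    | base => simp
    | succ n hn ih =>
      intro h
      obtain ⟨i1, i2⟩ := ih fun j h1 h2 => h j h1 (by omega)
      obtain ⟨d1, d2⟩ := hdesc n (hN₄ n (hk4.trans hn)) (h n hn (by omega))
      simp only [Finset.sum_Ico_succ_top hn]
      refine ⟨by linarith, ?_⟩
      have : x (n + 1) - x k - (∑ j ∈ Finset.Ico k n, p j + p n)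
          = (x n - x k - ∑ j ∈ Finset.Ico k n, p j) + (x (n + 1) - x n - p n) := by abel
      rw [this]
      refine (norm_add_le _ _).trans ?_
      linarith
  have hex : ∃ t, k ≤ t ∧ ‖gradient g (x t)‖ < ν := by
    by_contra hno
    push Not at hno
    refine ha' (summable_of_sum_range_le (c := ∑ j ∈ Finset.range k, a j
      + (g (x k) + c * D / 4) / (c * ν ^ 2)) ha fun n => ?_)
    refine (Finset.sum_le_sum_of_subset_of_nonneg (Finset.range_mono (le_max_left n k))
      fun i _ _ => ha i).trans ?_
    have hkm := le_max_right n k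
    generalize max n k = m at hkm
    rw [← Finset.sum_range_add_sum_Ico _ hkm]
    gcongr
    rw [le_div_iff₀ (by positivity)]
    have h1 := (run m hkm fun j h1 _ => hno j h1).1
    have h2 := (abs_lt.1 (hN₂ k m hk2 hkm)).2
    have h3 : (∑ j ∈ Finset.Ico k m, a j) * ν ^ 2
        ≤ ∑ j ∈ Finset.Ico k m, a j * ‖gradient g (x j)‖ ^ 2 := by
      rw [Finset.sum_mul]
      refine Finset.sum_le_sum fun j hj => mul_le_mul_of_nonneg_left ?_ (ha j)
      exact pow_le_pow_left₀ hν.le (hno j (Finset.mem_Ico.1 hj).1) 2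
    nlinarith [h0 (x m), mul_le_mul_of_nonneg_left h3 hc0.le]
  classical
  obtain ⟨hkt, htν⟩ := Nat.find_spec hex
  have hmin : ∀ j, k ≤ j → j < Nat.find hex → ν ≤ ‖gradient g (x j)‖ := fun j h1 h2 => by
    have := Nat.find_min hex h2
    push Not at this
    exact this h1
  obtain ⟨r1, r2⟩ := run _ hkt hmin
  have hP := hN₁ k _ hk1 hkt
  have hQ := (abs_lt.1 (hN₂ k _ hk2 hkt)).2
  have hgc := abs_lt.1 (hN₃ _ (hk3.trans hkt) k hk3)
  generalize Nat.find hex = t at *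
  have hdist : ν / L ≤ ‖x t - x k‖ := by
    rw [div_le_iff₀ hL]
    have h1 := hs (x k) (x t)
    have h2 := norm_sub_norm_le (gradient g (x k)) (gradient g (x t))
    rw [norm_sub_rev (x k)] at h1
    linarith
  have h1 : ‖x t - x k‖ ≤ ‖x t - x k - ∑ j ∈ Finset.Ico k t, p j‖
      + ‖∑ j ∈ Finset.Ico k t, p j‖ := by
    simpa using norm_add_le (x t - x k - ∑ j ∈ Finset.Ico k t, p j) (∑ j ∈ Finset.Ico k t, p j)
  have e1 : ν / L = ν / (2 * L) + ν / (2 * L) := by field_simp; ring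
  have h2 : ν / (2 * L) ≤ C * ∑ j ∈ Finset.Ico k t, a j * ‖gradient g (x j)‖ := by linarith
  have h3 : ν * ∑ j ∈ Finset.Ico k t, a j * ‖gradient g (x j)‖
      ≤ ∑ j ∈ Finset.Ico k t, a j * ‖gradient g (x j)‖ ^ 2 := by
    rw [Finset.mul_sum]
    refine Finset.sum_le_sum fun j hj => ?_
    have := hmin j (Finset.mem_Ico.1 hj).1 (Finset.mem_Ico.1 hj).2
    nlinarith [mul_nonneg (ha j) (norm_nonneg (gradient g (x j))),
      mul_le_mul_of_nonneg_left this (mul_nonneg (ha j) (norm_nonneg (gradient g (x j))))]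
  have h4 : D ≤ ∑ j ∈ Finset.Ico k t, a j * ‖gradient g (x j)‖ ^ 2 := by
    refine le_trans ?_ h3
    have : D = ν * (ν / (2 * L) / C) := by rw [hD]; field_simp
    rw [this]
    gcongr
    rw [div_le_iff₀ hC0]
    linarith
  nlinarith [mul_le_mul_of_nonneg_left h4 hc0.le, mul_pos hc0 hD0]

end Pathwise

/-- The objective corrected by the preconditioned second-moment bound of the gradient noise. -/
noncomputable def lyapunov {d : ℕ} (g : EuclideanSpace ℝ (Fin d) → ℝ) (σ₀ σ₁ : ℝ)
    (A : Fin d → ℝ) (x : EuclideanSpace ℝ (Fin d)) : ℝ :=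
  g x + ∑ i, A i * (σ₀ * gradient g x i ^ 2 + σ₁)

section Step

variable {d : ℕ} {g : EuclideanSpace ℝ (Fin d) → ℝ} {L σ₀ σ₁ α : ℝ}
  {x x' : EuclideanSpace ℝ (Fin d)} {A A' X : Fin d → ℝ}

theorem norm_sub_sq_eq_of_preconditioned_step (hx : ∀ i, x' i = x i - A' i * X i) :
    ‖x' - x‖ ^ 2 = ∑ i, (A' i * X i) ^ 2 := by
  rw [EuclideanSpace.real_norm_sq_eq]
  refine Finset.sum_congr rfl fun i _ => ?_
  simp [hx]

theorem sum_sq_mul_le (hA' : ∀ i, 0 ≤ A' i) (hAA : ∀ i, A' i ≤ A i) :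
    ∑ i, (A' i * X i) ^ 2 ≤ ∑ i, A i ^ 2 * X i ^ 2 := by
  refine Finset.sum_le_sum fun i _ => ?_
  rw [mul_pow]
  exact mul_le_mul_of_nonneg_right (pow_le_pow_left₀ (hA' i) (hAA i) 2) (sq_nonneg _)

theorem inner_preconditioned_step (hx : ∀ i, x' i = x i - A' i * X i)
    (h : EuclideanSpace ℝ (Fin d)) :
    inner ℝ h (x' - x) = ∑ i, -(h i * (A' i * X i)) := by
  rw [PiLp.inner_apply]
  refine Finset.sum_congr rfl fun i _ => ?_
  simp [hx]
  ring

theorem lyapunov_coordinate_le {a a' h h' X σ₀ σ₁ α : ℝ} (ha' : 0 ≤ a') (haa : a' ≤ a) (hα : a ≤ α)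
    (hσ₀ : 0 ≤ σ₀) (hσ₁ : 0 < σ₁) :
    -(h * (a' * X)) + a' * (σ₀ * h' ^ 2 + σ₁) - a * (σ₀ * h ^ 2 + σ₁) ≤
      -(1 / 2) * (a * h ^ 2) + a * h * (h - X)
        + a * h ^ 2 / 4 * (X ^ 2 / (σ₀ * h ^ 2 + σ₁) - 1)
        + (4 * σ₀ ^ 2 + σ₀) * α * (h' - h) ^ 2 := by
  set T := σ₀ * h ^ 2 + σ₁ with hT
  have hT0 : 0 < T := by positivity
  have h1 : h * X ≤ h ^ 2 * X ^ 2 / (4 * T) + T := by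
    rw [← sub_nonneg]
    have : h ^ 2 * X ^ 2 / (4 * T) + T - h * X = (h * X - 2 * T) ^ 2 / (4 * T) := by
      field_simp; ring
    rw [this]; positivity
  have h2 : (a - a') * (h * X) ≤ a * (h ^ 2 * X ^ 2 / (4 * T)) + (a - a') * T := by
    have := mul_le_mul_of_nonneg_left h1 (sub_nonneg.2 haa)
    have h3 : 0 ≤ a' * (h ^ 2 * X ^ 2 / (4 * T)) := by positivity
    nlinarith
  have h3 : σ₀ * (h' ^ 2 - h ^ 2) ≤ h ^ 2 / 4 + (4 * σ₀ ^ 2 + σ₀) * (h' - h) ^ 2 := by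
    nlinarith [sq_nonneg (h / 2 - 2 * σ₀ * (h' - h))]
  have h4 : a' * (σ₀ * (h' ^ 2 - h ^ 2)) ≤
      a * (h ^ 2 / 4) + (4 * σ₀ ^ 2 + σ₀) * α * (h' - h) ^ 2 := by
    refine (mul_le_mul_of_nonneg_left h3 ha').trans ?_
    have e1 : a' * (h ^ 2 / 4) ≤ a * (h ^ 2 / 4) := by gcongr
    have e2 : a' * ((4 * σ₀ ^ 2 + σ₀) * (h' - h) ^ 2) ≤
        α * ((4 * σ₀ ^ 2 + σ₀) * (h' - h) ^ 2) := by
      gcongr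
      linarith
    linarith
  have e3 : a * h ^ 2 / 4 * (X ^ 2 / T - 1)
      = a * (h ^ 2 * X ^ 2 / (4 * T)) - a * h ^ 2 / 4 := by
    field_simp
  rw [e3]
  have e4 : a' * (σ₀ * h' ^ 2 + σ₁) = a' * (σ₀ * (h' ^ 2 - h ^ 2)) + a' * T := by rw [hT]; ring
  rw [e4]
  nlinarith

theorem lyapunov_step_le (hL : 0 < L) (hσ₀ : 0 ≤ σ₀) (hσ₁ : 0 < σ₁) (hα : 0 ≤ α)
    (hd : Differentiable ℝ g)
    (hs : ∀ x y, ‖gradient g x - gradient g y‖ ≤ L * ‖x - y‖)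
    (hA' : ∀ i, 0 ≤ A' i) (hAA : ∀ i, A' i ≤ A i) (hAα : ∀ i, A i ≤ α)
    (hx : ∀ i, x' i = x i - A' i * X i) :
    lyapunov g σ₀ σ₁ A' x' ≤ lyapunov g σ₀ σ₁ A x
      + ∑ i, (-(1 / 2) * (A i * gradient g x i ^ 2)
        + A i * gradient g x i * (gradient g x i - X i)
        + A i * gradient g x i ^ 2 / 4 * (X i ^ 2 / (σ₀ * gradient g x i ^ 2 + σ₁) - 1)
        + (L + (4 * σ₀ ^ 2 + σ₀) * α * L ^ 2) * (A i ^ 2 * X i ^ 2)) := by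
  have h1 := (abs_le.1 (abs_sub_sub_inner_gradient_le hL.le hd hs x x')).2
  rw [inner_preconditioned_step hx] at h1
  have hN := norm_sub_sq_eq_of_preconditioned_step hx
  have hN' := sum_sq_mul_le (X := X) hA' hAA
  have h2 : ∑ i, (gradient g x' i - gradient g x i) ^ 2 ≤ L ^ 2 * ‖x' - x‖ ^ 2 := by
    have := EuclideanSpace.real_norm_sq_eq (gradient g x' - gradient g x)
    simp only [PiLp.sub_apply] at this
    rw [← this, ← mul_pow]
    exact pow_le_pow_left₀ (norm_nonneg _) (hs _ _) 2
  have h3 := Finset.sum_le_sum fun i (_ : i ∈ Finset.univ) =>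
    lyapunov_coordinate_le (X := X i) (h := gradient g x i) (h' := gradient g x' i)
      (hA' i) (hAA i) (hAα i) hσ₀ hσ₁
  simp only [Finset.sum_add_distrib, Finset.sum_sub_distrib, ← Finset.mul_sum] at h3 h1 ⊢
  unfold lyapunov
  have h4 := mul_le_mul_of_nonneg_left h2 (show 0 ≤ (4 * σ₀ ^ 2 + σ₀) * α by positivity)
  have h5 : (L + (4 * σ₀ ^ 2 + σ₀) * α * L ^ 2) * ‖x' - x‖ ^ 2 ≤
      (L + (4 * σ₀ ^ 2 + σ₀) * α * L ^ 2) * ∑ i, A i ^ 2 * X i ^ 2 := by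
    rw [hN]
    exact mul_le_mul_of_nonneg_left hN' (by positivity)
  linarith

theorem sq_lyapunov_sub_le {D : ℝ} (hL : 0 < L) (hσ₀ : 0 ≤ σ₀) (hσ₁ : 0 < σ₁) (hα : 0 ≤ α)
    (hd : Differentiable ℝ g)
    (hs : ∀ x y, ‖gradient g x - gradient g y‖ ≤ L * ‖x - y‖)
    (hA' : ∀ i, 0 ≤ A' i) (hAA : ∀ i, A' i ≤ A i) (hAα : ∀ i, A i ≤ α)
    (hx : ∀ i, x' i = x i - A' i * X i) (hD : ‖x' - x‖ ≤ D) :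
    (lyapunov g σ₀ σ₁ A' x' - lyapunov g σ₀ σ₁ A x) ^ 2 ≤
      2 * ((1 + 2 * L * σ₀ * α) * ‖gradient g x‖ + (L + L ^ 2 * σ₀ * α) * D) ^ 2
        * ∑ i, A i ^ 2 * X i ^ 2
      + 2 * (∑ i, A i * (σ₀ * gradient g x i ^ 2 + σ₁)) ^ 2 := by
  have h1 := abs_sub_sub_inner_gradient_le hL.le hd hs x x'
  have h2 := abs_real_inner_le_norm (gradient g x) (x' - x)
  have hN := norm_sub_sq_eq_of_preconditioned_step hx
  have hN' := sum_sq_mul_le (X := X) hA' hAA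
  set r := ‖x' - x‖ with hr
  have hr0 : 0 ≤ r := norm_nonneg _
  set G := ‖gradient g x‖ with hG
  have hG0 : 0 ≤ G := norm_nonneg _
  have hsub := hs x' x
  have h3 : |∑ i, A' i * (σ₀ * (gradient g x' i ^ 2 - gradient g x i ^ 2))| ≤
      α * σ₀ * (2 * (L * r) * G + (L * r) ^ 2) := by
    have c1 : ∀ i, |A' i * (σ₀ * (gradient g x' i ^ 2 - gradient g x i ^ 2))| ≤
        α * σ₀ * (2 * (|gradient g x' i - gradient g x i| * |gradient g x i|)
          + (gradient g x' i - gradient g x i) ^ 2) := fun i => by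
      rw [abs_mul, abs_mul, abs_of_nonneg (hA' i), abs_of_nonneg hσ₀, mul_assoc]
      refine mul_le_mul ((hAA i).trans (hAα i)) (mul_le_mul_of_nonneg_left ?_ hσ₀)
        (by positivity) hα
      have : gradient g x' i ^ 2 - gradient g x i ^ 2
          = 2 * ((gradient g x' i - gradient g x i) * gradient g x i)
            + (gradient g x' i - gradient g x i) ^ 2 := by ring
      rw [this]
      refine (abs_add_le _ _).trans ?_
      rw [abs_mul, abs_mul, abs_of_nonneg (sq_nonneg (gradient g x' i - gradient g x i)), abs_two]
    refine (Finset.abs_sum_le_sum_abs _ _).trans ((Finset.sum_le_sum fun i _ => c1 i).trans ?_)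
    rw [← Finset.mul_sum, Finset.sum_add_distrib, ← Finset.mul_sum]
    refine mul_le_mul_of_nonneg_left ?_ (by positivity)
    have n1 := EuclideanSpace.real_norm_sq_eq (gradient g x' - gradient g x)
    simp only [PiLp.sub_apply] at n1
    have n2 := EuclideanSpace.real_norm_sq_eq (gradient g x)
    have cs : ∑ i, |gradient g x' i - gradient g x i| * |gradient g x i| ≤ (L * r) * G := by
      refine (Real.sum_mul_le_sqrt_mul_sqrt _ _ _).trans ?_
      simp only [sq_abs]
      rw [← n1, ← n2, Real.sqrt_sq (norm_nonneg _), Real.sqrt_sq (norm_nonneg _)]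
      gcongr
    rw [← n1]
    have := pow_le_pow_left₀ (norm_nonneg _) hsub 2
    linarith
  have h4 : 0 ≤ ∑ i, (A i - A' i) * (σ₀ * gradient g x i ^ 2 + σ₁) :=
    Finset.sum_nonneg fun i _ => mul_nonneg (sub_nonneg.2 (hAA i)) (by positivity)
  have h5 : ∑ i, (A i - A' i) * (σ₀ * gradient g x i ^ 2 + σ₁) ≤
      ∑ i, A i * (σ₀ * gradient g x i ^ 2 + σ₁) :=
    Finset.sum_le_sum fun i _ => mul_le_mul_of_nonneg_right (by linarith [hA' i]) (by positivity)
  have e : lyapunov g σ₀ σ₁ A' x' - lyapunov g σ₀ σ₁ A x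
      = (g x' - g x - inner ℝ (gradient g x) (x' - x)) + inner ℝ (gradient g x) (x' - x)
        + ∑ i, A' i * (σ₀ * (gradient g x' i ^ 2 - gradient g x i ^ 2))
        - ∑ i, (A i - A' i) * (σ₀ * gradient g x i ^ 2 + σ₁) := by
    unfold lyapunov
    have : ∑ i, A' i * (σ₀ * gradient g x' i ^ 2 + σ₁)
        = ∑ i, A' i * (σ₀ * (gradient g x' i ^ 2 - gradient g x i ^ 2))
          + ∑ i, A i * (σ₀ * gradient g x i ^ 2 + σ₁)
          - ∑ i, (A i - A' i) * (σ₀ * gradient g x i ^ 2 + σ₁) := by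
      rw [← Finset.sum_add_distrib, ← Finset.sum_sub_distrib]
      exact Finset.sum_congr rfl fun i _ => by ring
    linarith
  set M := (1 + 2 * L * σ₀ * α) * G + (L + L ^ 2 * σ₀ * α) * D with hM
  set T := ∑ i, A i * (σ₀ * gradient g x i ^ 2 + σ₁) with hT
  have h6 : |lyapunov g σ₀ σ₁ A' x' - lyapunov g σ₀ σ₁ A x| ≤ M * r + T := by
    have hq : (L + L ^ 2 * σ₀ * α) * r ^ 2 ≤ (L + L ^ 2 * σ₀ * α) * D * r := by
      have := mul_le_mul_of_nonneg_left (mul_le_mul_of_nonneg_right hD hr0)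
        (show 0 ≤ L + L ^ 2 * σ₀ * α by positivity)
      linarith
    rw [abs_le] at h1 h2 h3 ⊢
    rw [e]
    constructor <;> nlinarith
  calc _ = |lyapunov g σ₀ σ₁ A' x' - lyapunov g σ₀ σ₁ A x| ^ 2 := (sq_abs _).symm
    _ ≤ (M * r + T) ^ 2 := pow_le_pow_left₀ (abs_nonneg _) h6 2
    _ ≤ 2 * M ^ 2 * r ^ 2 + 2 * T ^ 2 := by nlinarith [sq_nonneg (M * r - T)]
    _ ≤ _ := by
      have : 2 * M ^ 2 * r ^ 2 ≤ 2 * M ^ 2 * ∑ i, A i ^ 2 * X i ^ 2 := by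
        rw [hN]; gcongr
      linarith

end Step

/-- Bounded real random variables that are strongly measurable for a sub-σ-algebra `m`. -/
def BoundedMeasurable {Ω : Type*} (m : MeasurableSpace Ω) (f : Ω → ℝ) : Prop :=
  StronglyMeasurable[m] f ∧ ∃ C, ∀ ω, |f ω| ≤ C

namespace BoundedMeasurable

variable {Ω : Type*} {m m' m0 : MeasurableSpace Ω} {f f' : Ω → ℝ}

theorem const (c : ℝ) : BoundedMeasurable m fun _ => c :=
  ⟨stronglyMeasurable_const, |c|, fun _ => le_rfl⟩

theorem add (hf : BoundedMeasurable m f) (hf' : BoundedMeasurable m f') :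
    BoundedMeasurable m fun ω => f ω + f' ω := by
  obtain ⟨h, C, hC⟩ := hf
  obtain ⟨h', C', hC'⟩ := hf'
  exact ⟨h.add h', C + C', fun ω => (abs_add_le _ _).trans (add_le_add (hC ω) (hC' ω))⟩

theorem mul (hf : BoundedMeasurable m f) (hf' : BoundedMeasurable m f') :
    BoundedMeasurable m fun ω => f ω * f' ω := by
  obtain ⟨h, C, hC⟩ := hf
  obtain ⟨h', C', hC'⟩ := hf'
  refine ⟨h.mul h', C * C', fun ω => ?_⟩
  rw [abs_mul]
  exact mul_le_mul (hC ω) (hC' ω) (abs_nonneg _) ((abs_nonneg _).trans (hC ω))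

theorem neg (hf : BoundedMeasurable m f) : BoundedMeasurable m fun ω => -f ω := by
  obtain ⟨h, C, hC⟩ := hf
  exact ⟨h.neg, C, fun ω => by rw [abs_neg]; exact hC ω⟩

theorem sub (hf : BoundedMeasurable m f) (hf' : BoundedMeasurable m f') :
    BoundedMeasurable m fun ω => f ω - f' ω := by
  simpa only [sub_eq_add_neg] using hf.add hf'.neg

theorem pow (hf : BoundedMeasurable m f) (n : ℕ) : BoundedMeasurable m fun ω => f ω ^ n := by
  induction n with
  | zero => simpa using const 1
  | succ n ih => simpa only [pow_succ] using ih.mul hf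

theorem sum {ι : Type*} {s : Finset ι} {F : ι → Ω → ℝ} (hF : ∀ i, BoundedMeasurable m (F i)) :
    BoundedMeasurable m fun ω => ∑ i ∈ s, F i ω := by
  classical
  induction s using Finset.induction_on with
  | empty => simpa using const 0
  | insert i s hi ih => simpa only [Finset.sum_insert hi] using (hF i).add ih

theorem max (hf : BoundedMeasurable m f) (hf' : BoundedMeasurable m f') :
    BoundedMeasurable m fun ω => max (f ω) (f' ω) := by
  obtain ⟨h, C, hC⟩ := hf
  obtain ⟨h', C', hC'⟩ := hf'
  exact ⟨h.sup h', Max.max C C', fun ω =>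
    abs_max_le_max_abs_abs.trans (max_le_max (hC ω) (hC' ω))⟩

theorem inv {c : ℝ} (hf : BoundedMeasurable m f) (hc : 0 < c) (h : ∀ ω, c ≤ f ω) :
    BoundedMeasurable m fun ω => (f ω)⁻¹ := by
  refine ⟨(hf.1.measurable.inv).stronglyMeasurable, c⁻¹, fun ω => ?_⟩
  rw [abs_of_nonneg (inv_nonneg.2 (hc.le.trans (h ω)))]
  exact inv_anti₀ hc (h ω)

theorem indicator {s : Set Ω} (hf : BoundedMeasurable m f) (hs : MeasurableSet[m] s) :
    BoundedMeasurable m (s.indicator f) := by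
  obtain ⟨h, C, hC⟩ := hf
  refine ⟨h.indicator hs, C, fun ω => ?_⟩
  by_cases hω : ω ∈ s
  · rw [Set.indicator_of_mem hω]
    exact hC ω
  · rw [Set.indicator_of_notMem hω, abs_zero]
    exact (abs_nonneg _).trans (hC ω)

theorem mono (hf : BoundedMeasurable m f) (h : m ≤ m') : BoundedMeasurable m' f :=
  ⟨hf.1.mono h, hf.2⟩

theorem integrable {P : Measure Ω} [IsFiniteMeasure P] (hf : BoundedMeasurable m0 f) :
    Integrable f P := by
  obtain ⟨h, C, hC⟩ := hf
  exact Integrable.of_bound h.aestronglyMeasurable C (Eventually.of_forall hC)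

theorem integrable_mul {P : Measure Ω} (hf : BoundedMeasurable m0 f) (hf' : Integrable f' P) :
    Integrable (fun ω => f ω * f' ω) P := by
  obtain ⟨h, C, hC⟩ := hf
  exact hf'.bdd_mul h.aestronglyMeasurable (Eventually.of_forall hC)

theorem integral_mul_eq_of_condExp_eq {P : Measure Ω} [IsFiniteMeasure P] (hm : m ≤ m0)
    {X Y : Ω → ℝ} (hf : BoundedMeasurable m f) (hX : Integrable X P)
    (hXY : P[X | m] =ᵐ[P] Y) : ∫ ω, f ω * X ω ∂P = ∫ ω, f ω * Y ω ∂P := by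
  have h := condExp_mul_of_stronglyMeasurable_left hf.1 ((hf.mono hm).integrable_mul hX) hX
  calc ∫ ω, f ω * X ω ∂P = ∫ ω, (P[f * X | m]) ω ∂P := (integral_condExp hm).symm
    _ = _ := integral_congr_ae (by
      filter_upwards [h, hXY] with ω h1 h2
      rw [h1, Pi.mul_apply, h2])

theorem integral_mul_le_of_condExp_le {P : Measure Ω} [IsFiniteMeasure P] (hm : m ≤ m0)
    {X Y : Ω → ℝ} (hf : BoundedMeasurable m f) (hf0 : ∀ ω, 0 ≤ f ω) (hX : Integrable X P)
    (hY : Integrable Y P) (hXY : P[X | m] ≤ᵐ[P] Y) :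
    ∫ ω, f ω * X ω ∂P ≤ ∫ ω, f ω * Y ω ∂P := by
  rw [hf.integral_mul_eq_of_condExp_eq hm hX EventuallyEq.rfl]
  refine integral_mono_ae ((hf.mono hm).integrable_mul integrable_condExp)
    ((hf.mono hm).integrable_mul hY) ?_
  filter_upwards [hXY] with ω h
  exact mul_le_mul_of_nonneg_left h (hf0 ω)

end BoundedMeasurable

/-- Stochastic gradient descent with a nonincreasing coordinate-wise preconditioner `A` of order
`1 / √k`, whose update at step `k` uses the already refreshed preconditioner `A (k + 1)`. -/
structure IsPreconditionedSGD {d : ℕ} {Ω : Type*} {m0 : MeasurableSpace Ω} (P : Measure Ω)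
    (ℱ : Filtration ℕ m0) (g : EuclideanSpace ℝ (Fin d) → ℝ) (σ₀ σ₁ ε : ℝ)
    (x : ℕ → Ω → EuclideanSpace ℝ (Fin d)) (X A : ℕ → Ω → Fin d → ℝ) : Prop where
  x_meas : ∀ k, StronglyMeasurable[ℱ k] (x k)
  A_meas : ∀ k i, StronglyMeasurable[ℱ k] fun ω => A k ω i
  X_meas : ∀ k i, StronglyMeasurable[ℱ (k + 1)] fun ω => X k ω i
  X_sq_int : ∀ k i, Integrable (fun ω => X k ω i ^ 2) P
  A_nonneg : ∀ k ω i, 0 ≤ A k ω i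
  A_le : ∀ k ω i, A k ω i ≤ 1 / (ε * √(k + 1))
  A_succ_le : ∀ k ω i, A (k + 1) ω i ≤ A k ω i
  step_le : ∀ k ω i, |A (k + 1) ω i * X k ω i| ≤ 1
  x_succ : ∀ k ω i, x (k + 1) ω i = x k ω i - A (k + 1) ω i * X k ω i
  x_zero_bdd : ∃ B, ∀ ω, ‖x 0 ω‖ ≤ B
  unbiased : ∀ k i, P[fun ω => X k ω i | ℱ k] =ᵐ[P] fun ω => gradient g (x k ω) i
  second_moment : ∀ k i, P[fun ω => X k ω i ^ 2 | ℱ k] ≤ᵐ[P]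
    fun ω => σ₀ * gradient g (x k ω) i ^ 2 + σ₁

namespace IsPreconditionedSGD

variable {d : ℕ} {Ω : Type*} {m0 : MeasurableSpace Ω} {P : Measure Ω}
  {ℱ : Filtration ℕ m0} {g : EuclideanSpace ℝ (Fin d) → ℝ} {L σ₀ σ₁ ε : ℝ}
  {x : ℕ → Ω → EuclideanSpace ℝ (Fin d)} {X A : ℕ → Ω → Fin d → ℝ}

theorem norm_step_le (h : IsPreconditionedSGD P ℱ g σ₀ σ₁ ε x X A) (k : ℕ) (ω : Ω) :
    ‖x (k + 1) ω - x k ω‖ ≤ √d := by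
  apply Real.le_sqrt_of_sq_le
  rw [norm_sub_sq_eq_of_preconditioned_step (h.x_succ k ω)]
  refine (Finset.sum_le_card_nsmul _ _ 1 fun i _ => ?_).trans (by simp)
  rw [← sq_abs]
  exact pow_le_one₀ (abs_nonneg _) (h.step_le k ω i)

theorem x_bdd (h : IsPreconditionedSGD P ℱ g σ₀ σ₁ ε x X A) (k : ℕ) :
    ∃ B, ∀ ω, ‖x k ω‖ ≤ B := by
  induction k with
  | zero => exact h.x_zero_bdd
  | succ k ih =>
    obtain ⟨B, hB⟩ := ih
    refine ⟨B + √d, fun ω => ?_⟩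
    have := norm_add_le (x k ω) (x (k + 1) ω - x k ω)
    rw [add_sub_cancel] at this
    linarith [hB ω, h.norm_step_le k ω]

theorem comp_x (h : IsPreconditionedSGD P ℱ g σ₀ σ₁ ε x X A) (k : ℕ)
    {φ : EuclideanSpace ℝ (Fin d) → ℝ} (hφ : Continuous φ) :
    BoundedMeasurable (ℱ k) fun ω => φ (x k ω) := by
  obtain ⟨B, hB⟩ := h.x_bdd k
  obtain ⟨C, hC⟩ :=
    (isCompact_closedBall (0 : EuclideanSpace ℝ (Fin d)) B).exists_bound_of_continuousOn
    hφ.continuousOn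
  exact ⟨hφ.comp_stronglyMeasurable (h.x_meas k), C, fun ω => hC _ (by simpa using hB ω)⟩

theorem boundedMeasurable_A (h : IsPreconditionedSGD P ℱ g σ₀ σ₁ ε x X A) (k : ℕ) (i : Fin d) :
    BoundedMeasurable (ℱ k) fun ω => A k ω i :=
  ⟨h.A_meas k i, _, fun ω => (abs_of_nonneg (h.A_nonneg k ω i)).trans_le (h.A_le k ω i)⟩

theorem boundedMeasurable_gradient (h : IsPreconditionedSGD P ℱ g σ₀ σ₁ ε x X A)
    (hg : Continuous (gradient g)) (k : ℕ) (i : Fin d) :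
    BoundedMeasurable (ℱ k) fun ω => gradient g (x k ω) i :=
  h.comp_x k (φ := fun y => gradient g y i) (by fun_prop)

theorem boundedMeasurable_moment (h : IsPreconditionedSGD P ℱ g σ₀ σ₁ ε x X A)
    (hg : Continuous (gradient g)) (k : ℕ) (i : Fin d) :
    BoundedMeasurable (ℱ k) fun ω => σ₀ * gradient g (x k ω) i ^ 2 + σ₁ :=
  ((BoundedMeasurable.const σ₀).mul ((h.boundedMeasurable_gradient hg k i).pow 2)).add
    (BoundedMeasurable.const σ₁)

theorem boundedMeasurable_lyapunov (h : IsPreconditionedSGD P ℱ g σ₀ σ₁ ε x X A)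
    (hg : Continuous g) (hg' : Continuous (gradient g)) (k : ℕ) :
    BoundedMeasurable (ℱ k) fun ω => lyapunov g σ₀ σ₁ (A k ω) (x k ω) :=
  (h.comp_x k hg).add (BoundedMeasurable.sum fun i =>
    (h.boundedMeasurable_A k i).mul (h.boundedMeasurable_moment hg' k i))

theorem X_memLp (h : IsPreconditionedSGD P ℱ g σ₀ σ₁ ε x X A) (k : ℕ) (i : Fin d) :
    MemLp (fun ω => X k ω i) 2 P :=
  (memLp_two_iff_integrable_sq ((h.X_meas k i).mono (ℱ.le _)).aestronglyMeasurable).2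
    (h.X_sq_int k i)

variable [IsProbabilityMeasure P]

theorem X_int (h : IsPreconditionedSGD P ℱ g σ₀ σ₁ ε x X A) (k : ℕ) (i : Fin d) :
    Integrable (fun ω => X k ω i) P :=
  (h.X_memLp k i).integrable one_le_two

theorem integral_mul_noise_eq_zero (h : IsPreconditionedSGD P ℱ g σ₀ σ₁ ε x X A)
    (hg : Continuous (gradient g)) {k : ℕ} (i : Fin d) {f : Ω → ℝ}
    (hf : BoundedMeasurable (ℱ k) f) :
    ∫ ω, f ω * (gradient g (x k ω) i - X k ω i) ∂P = 0 := by
  have hf' := hf.mono (ℱ.le k)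
  simp only [mul_sub]
  rw [integral_sub (hf'.mul ((h.boundedMeasurable_gradient hg k i).mono (ℱ.le k))).integrable
    (hf'.integrable_mul (h.X_int k i)),
    hf.integral_mul_eq_of_condExp_eq (ℱ.le k) (h.X_int k i) (h.unbiased k i), sub_self]

theorem integral_mul_sq_le (h : IsPreconditionedSGD P ℱ g σ₀ σ₁ ε x X A)
    (hg : Continuous (gradient g)) {k : ℕ} (i : Fin d) {f : Ω → ℝ}
    (hf : BoundedMeasurable (ℱ k) f) (hf0 : ∀ ω, 0 ≤ f ω) :
    ∫ ω, f ω * X k ω i ^ 2 ∂P ≤ ∫ ω, f ω * (σ₀ * gradient g (x k ω) i ^ 2 + σ₁) ∂P :=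
  hf.integral_mul_le_of_condExp_le (ℱ.le k) hf0 (h.X_sq_int k i)
    ((h.boundedMeasurable_moment hg k i).mono (ℱ.le k)).integrable (h.second_moment k i)

/-- Taking expectations in a pathwise bound that is affine in the gradient noise and in the
squares of the stochastic gradient. -/
theorem integral_le_of_le (h : IsPreconditionedSGD P ℱ g σ₀ σ₁ ε x X A)
    (hg : Continuous (gradient g)) {k : ℕ} {Y u : Ω → ℝ} {p r : Fin d → Ω → ℝ}
    (hY : Integrable Y P) (hu : BoundedMeasurable (ℱ k) u)
    (hp : ∀ i, BoundedMeasurable (ℱ k) (p i)) (hr : ∀ i, BoundedMeasurable (ℱ k) (r i))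
    (hr0 : ∀ i ω, 0 ≤ r i ω)
    (hle : ∀ ω, Y ω ≤ u ω + ∑ i, (p i ω * (gradient g (x k ω) i - X k ω i)
      + r i ω * X k ω i ^ 2)) :
    ∫ ω, Y ω ∂P ≤ ∫ ω, (u ω + ∑ i, r i ω * (σ₀ * gradient g (x k ω) i ^ 2 + σ₁)) ∂P := by
  have hN : ∀ i, Integrable (fun ω => p i ω * (gradient g (x k ω) i - X k ω i)) P := fun i =>
    ((hp i).mono (ℱ.le k)).integrable_mul
      (((h.boundedMeasurable_gradient hg k i).mono (ℱ.le k)).integrable.sub (h.X_int k i))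
  have hR : ∀ i, Integrable (fun ω => r i ω * X k ω i ^ 2) P := fun i =>
    ((hr i).mono (ℱ.le k)).integrable_mul (h.X_sq_int k i)
  have hT : ∀ i, Integrable (fun ω => r i ω * (σ₀ * gradient g (x k ω) i ^ 2 + σ₁)) P := fun i =>
    (((hr i).mul (h.boundedMeasurable_moment hg k i)).mono (ℱ.le k)).integrable
  have hu' := (hu.mono (ℱ.le k)).integrable (P := P)
  have hNR : ∀ i, Integrable (fun ω => p i ω * (gradient g (x k ω) i - X k ω i)
      + r i ω * X k ω i ^ 2) P := fun i => (hN i).add (hR i)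
  have hs := integrable_finsetSum Finset.univ fun i _ => hNR i
  have hs' := integrable_finsetSum Finset.univ fun i _ => hT i
  calc ∫ ω, Y ω ∂P ≤ ∫ ω, (u ω + ∑ i, (p i ω * (gradient g (x k ω) i - X k ω i)
      + r i ω * X k ω i ^ 2)) ∂P := integral_mono hY (hu'.add hs) hle
    _ = ∫ ω, u ω ∂P + ∑ i, (∫ ω, p i ω * (gradient g (x k ω) i - X k ω i) ∂P
        + ∫ ω, r i ω * X k ω i ^ 2 ∂P) := by
      rw [integral_add hu' hs, integral_finsetSum _ fun i _ => hNR i]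
      congr 1
      exact Finset.sum_congr rfl fun i _ => integral_add (hN i) (hR i)
    _ ≤ ∫ ω, u ω ∂P + ∑ i, ∫ ω, r i ω * (σ₀ * gradient g (x k ω) i ^ 2 + σ₁) ∂P := by
      gcongr with i
      rw [h.integral_mul_noise_eq_zero hg i (hp i), zero_add]
      exact h.integral_mul_sq_le hg i (hr i) (hr0 i)
    _ = _ := by
      rw [integral_add hu' hs', integral_finsetSum _ fun i _ => hT i]

end IsPreconditionedSGD

/-- Nonnegative differentiable functions with an `L`-Lipschitz gradient. -/
structure IsSmoothObjective {d : ℕ} (g : EuclideanSpace ℝ (Fin d) → ℝ) (L : ℝ) : Prop where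
  pos : 0 < L
  diff : Differentiable ℝ g
  nonneg : ∀ x, 0 ≤ g x
  smooth : ∀ x y, ‖gradient g x - gradient g y‖ ≤ L * ‖x - y‖

section Excess

variable {d : ℕ} {g : EuclideanSpace ℝ (Fin d) → ℝ} {L σ₀ σ₁ α a δ K K₀ : ℝ}
  {x x' : EuclideanSpace ℝ (Fin d)} {A A' X : Fin d → ℝ}

theorem IsSmoothObjective.continuous_gradient (hg : IsSmoothObjective g L) :
    Continuous (gradient g) :=
  continuous_of_norm_sub_le hg.smooth

theorem le_lyapunov (hσ₀ : 0 ≤ σ₀) (hσ₁ : 0 ≤ σ₁) (hA : ∀ i, 0 ≤ A i) :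
    g x ≤ lyapunov g σ₀ σ₁ A x :=
  le_add_of_nonneg_right (Finset.sum_nonneg fun i _ => mul_nonneg (hA i) (by positivity))

theorem lyapunov_le (hg : IsSmoothObjective g L) (hσ₀ : 0 ≤ σ₀) (hσ₁ : 0 ≤ σ₁)
    (hA : ∀ i, A i ≤ a) (ha₀ : 4 * L * σ₀ * a ≤ 1 / 5) (ha₁ : d * σ₁ * a ≤ 1) (ha : 0 ≤ a) :
    lyapunov g σ₀ σ₁ A x ≤ 6 / 5 * g x + 1 := by
  have h1 : ∑ i, A i * (σ₀ * gradient g x i ^ 2 + σ₁) ≤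
      ∑ i, a * (σ₀ * gradient g x i ^ 2 + σ₁) :=
    Finset.sum_le_sum fun i _ => mul_le_mul_of_nonneg_right (hA i) (by positivity)
  rw [← Finset.mul_sum, Finset.sum_add_distrib, ← Finset.mul_sum,
    ← EuclideanSpace.real_norm_sq_eq] at h1
  simp only [Finset.sum_const, Finset.card_univ, Fintype.card_fin, nsmul_eq_mul] at h1
  have h2 := mul_le_mul_of_nonneg_left (norm_gradient_sq_le hg.pos hg.diff hg.nonneg hg.smooth x)
    (show 0 ≤ a * σ₀ by positivity)
  have h3 := mul_le_mul_of_nonneg_right ha₀ (hg.nonneg x)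
  unfold lyapunov
  nlinarith

theorem lyapunov_le_of_lt_half (hg : IsSmoothObjective g L) (hσ₀ : 0 ≤ σ₀) (hσ₁ : 0 ≤ σ₁)
    (hA' : ∀ i, 0 ≤ A' i) (hAA : ∀ i, A' i ≤ A i)
    (hA : ∀ i, A i ≤ a) (ha₀ : 4 * L * σ₀ * a ≤ 1 / 5) (ha₁ : d * σ₁ * a ≤ 1) (ha : 0 ≤ a)
    (hD : ‖x' - x‖ ≤ √d) (hK : 40 * L * d + 3 ≤ K)
    (h : lyapunov g σ₀ σ₁ A x < K / 2) : lyapunov g σ₀ σ₁ A' x' ≤ K := by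
  have h1 := lyapunov_le (x := x') hg hσ₀ hσ₁ (fun i => (hAA i).trans (hA i)) ha₀ ha₁ ha
  have h2 := le_lyapunov (g := g) (x := x) hσ₀ hσ₁ fun i => (hA' i).trans (hAA i)
  have h3 := (abs_le.1 (abs_sub_sub_inner_gradient_le hg.pos.le hg.diff hg.smooth x x')).2
  have h4 := real_inner_le_norm (gradient g x) (x' - x)
  have h5 := norm_gradient_sq_le hg.pos hg.diff hg.nonneg hg.smooth x
  have h6 : ‖x' - x‖ ^ 2 ≤ d := by
    have := pow_le_pow_left₀ (norm_nonneg _) hD 2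
    rwa [Real.sq_sqrt (Nat.cast_nonneg d)] at this
  have hLpos := hg.pos
  have h7 : ‖gradient g x‖ * ‖x' - x‖ ≤ g x / 10 + 10 * L * ‖x' - x‖ ^ 2 := by
    have : ‖gradient g x‖ * ‖x' - x‖ ≤
        ‖gradient g x‖ ^ 2 / (40 * L) + 10 * L * ‖x' - x‖ ^ 2 := by
      rw [← sub_nonneg]
      have : ‖gradient g x‖ ^ 2 / (40 * L) + 10 * L * ‖x' - x‖ ^ 2 - ‖gradient g x‖ * ‖x' - x‖
          = (‖gradient g x‖ - 20 * L * ‖x' - x‖) ^ 2 / (40 * L) := by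
        field_simp
        ring
      rw [this]
      positivity
    have h8 : ‖gradient g x‖ ^ 2 / (40 * L) ≤ g x / 10 := by
      rw [div_le_iff₀ (by positivity)]
      linarith
    linarith
  have h9 := mul_le_mul_of_nonneg_left h6 hg.pos.le
  have h10 := mul_nonneg hg.pos.le (Nat.cast_nonneg (α := ℝ) d)
  linarith

theorem sq_posPart_sub_le (K w w' : ℝ) :
    max (w' - K) 0 ^ 2 ≤ max (w - K) 0 ^ 2 + 2 * max (w - K) 0 * (w' - w) + (w' - w) ^ 2 := by
  rcases le_total (w' - K) 0 with h' | h' <;> rcases le_total (w - K) 0 with h | h <;>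
    simp only [max_eq_left, max_eq_right, h, h'] <;> nlinarith [sq_nonneg (w - K + (w' - w))]

/-- One step of the squared excess of the Lyapunov function above a high level, with the second
order term localized to the set where the excess may become positive. -/
theorem sq_posPart_lyapunov_step_le (hg : IsSmoothObjective g L) (hσ₀ : 0 ≤ σ₀) (hσ₁ : 0 < σ₁)
    (hα : 0 ≤ α) (hA' : ∀ i, 0 ≤ A' i) (hAA : ∀ i, A' i ≤ A i) (hAα : ∀ i, A i ≤ α)
    (hx : ∀ i, x' i = x i - A' i * X i)
    (hA : ∀ i, A i ≤ a) (ha₀ : 4 * L * σ₀ * a ≤ 1 / 5) (ha₁ : d * σ₁ * a ≤ 1) (ha : 0 ≤ a)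
    (hD : ‖x' - x‖ ≤ √d) (hK : 40 * L * d + 3 ≤ K) {J : ℝ} (hJ0 : 0 ≤ J)
    (hJ : K / 2 ≤ lyapunov g σ₀ σ₁ A x → J = 1) :
    max (lyapunov g σ₀ σ₁ A' x' - K) 0 ^ 2 ≤
      (max (lyapunov g σ₀ σ₁ A x - K) 0 ^ 2
        + 2 * max (lyapunov g σ₀ σ₁ A x - K) 0 * ∑ i, (-(3 / 4) * (A i * gradient g x i ^ 2))
        + J * (2 * (∑ i, A i * (σ₀ * gradient g x i ^ 2 + σ₁)) ^ 2))
      + ∑ i, (2 * max (lyapunov g σ₀ σ₁ A x - K) 0 * (A i * gradient g x i)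
          * (gradient g x i - X i)
        + (2 * max (lyapunov g σ₀ σ₁ A x - K) 0
            * (A i * gradient g x i ^ 2 / 4 * (σ₀ * gradient g x i ^ 2 + σ₁)⁻¹
              + (L + (4 * σ₀ ^ 2 + σ₀) * α * L ^ 2) * A i ^ 2)
          + J * (2 * ((1 + 2 * L * σ₀ * α) * ‖gradient g x‖
            + (L + L ^ 2 * σ₀ * α) * √d) ^ 2 * A i ^ 2)) * X i ^ 2) := by
  have h1 := lyapunov_step_le hg.pos hσ₀ hσ₁ hα hg.diff hg.smooth hA' hAA hAα hx
  have h2 := sq_lyapunov_sub_le hg.pos hσ₀ hσ₁ hα hg.diff hg.smooth hA' hAA hAα hx hD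
  have h3 := sq_posPart_sub_le K (lyapunov g σ₀ σ₁ A x) (lyapunov g σ₀ σ₁ A' x')
  have h4 := fun h => lyapunov_le_of_lt_half hg hσ₀ hσ₁.le hA' hAA hA ha₀ ha₁ ha hD hK h
  set W := lyapunov g σ₀ σ₁ A x
  set W' := lyapunov g σ₀ σ₁ A' x'
  set M := (1 + 2 * L * σ₀ * α) * ‖gradient g x‖ + (L + L ^ 2 * σ₀ * α) * √d
  set S := ∑ i, A i * (σ₀ * gradient g x i ^ 2 + σ₁)
  set p := max (W - K) 0 with hp
  have hp0 : 0 ≤ p := le_max_right _ _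
  have e : ∀ i, 2 * p * (-(3 / 4) * (A i * gradient g x i ^ 2)) +
      (2 * p * (A i * gradient g x i) * (gradient g x i - X i)
        + (2 * p * (A i * gradient g x i ^ 2 / 4 * (σ₀ * gradient g x i ^ 2 + σ₁)⁻¹
              + (L + (4 * σ₀ ^ 2 + σ₀) * α * L ^ 2) * A i ^ 2)
          + J * (2 * M ^ 2 * A i ^ 2)) * X i ^ 2) =
      2 * p * (-(1 / 2) * (A i * gradient g x i ^ 2)
        + A i * gradient g x i * (gradient g x i - X i)
        + A i * gradient g x i ^ 2 / 4 * (X i ^ 2 / (σ₀ * gradient g x i ^ 2 + σ₁) - 1)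
        + (L + (4 * σ₀ ^ 2 + σ₀) * α * L ^ 2) * (A i ^ 2 * X i ^ 2))
      + J * (2 * M ^ 2) * (A i ^ 2 * X i ^ 2) := fun i => by ring
  have hsum (u v w z : Fin d → ℝ) (b c : ℝ) (h : ∀ i, b * u i + v i = b * w i + c * z i) :
      b * ∑ i, u i + ∑ i, v i = b * ∑ i, w i + c * ∑ i, z i := by
    simp only [Finset.mul_sum, ← Finset.sum_add_distrib]
    exact Finset.sum_congr rfl fun i _ => h i
  have e' := hsum _ _ _ _ _ _ e
  have h5 := mul_le_mul_of_nonneg_left (sub_le_iff_le_add'.2 h1) (show 0 ≤ 2 * p by positivity)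
  have hX : 0 ≤ ∑ i, A i ^ 2 * X i ^ 2 := Finset.sum_nonneg fun i _ => by positivity
  rcases lt_or_ge W (K / 2) with hW | hW
  · have hp' : p = 0 := max_eq_right (by nlinarith [hg.pos, mul_nonneg hg.pos.le d.cast_nonneg])
    rw [max_eq_right (by linarith [h4 hW])]
    rw [hp'] at e' ⊢
    simp only [mul_zero, zero_mul, zero_add, zero_pow two_ne_zero] at e' ⊢
    rw [e']
    positivity
  · rw [hJ hW] at e' ⊢
    linarith

/-- The expected one-step change of the squared excess is controlled by `A`-weighted gradients. -/
theorem sq_excess_drift_le (hg : IsSmoothObjective g L) (hd : 0 < d) (hσ₀ : 0 ≤ σ₀)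
    (hσ₁ : 0 < σ₁) (hδ : 0 < δ) {c₁ c₂ c₃ c₄ : ℝ} (hc₁ : 0 ≤ c₁) (hc₂ : 0 ≤ c₂) (hc₃ : 0 ≤ c₃)
    (hc₄ : σ₀ + σ₁ / δ ^ 2 = c₄)
    (hA0 : ∀ i, 0 ≤ A i) (hA : ∀ i, A i ≤ a) (ha : 0 ≤ a)
    (ha₂ : c₃ * a * c₄ ≤ 1 / 4)
    (ha₃ : 8 * L * c₄ * (2 * c₁ ^ 2 + 2 * (c₂ / δ) ^ 2 + c₄) * a ≤ 1 / 2)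
    (hK : 0 ≤ K) {J : ℝ}
    (hJ' : lyapunov g σ₀ σ₁ A x < K / 2 → J = 0)
    (hJ : K / 2 ≤ lyapunov g σ₀ σ₁ A x → J = 1 ∧ ∀ i, δ < |gradient g x i|) :
    (max (lyapunov g σ₀ σ₁ A x - K) 0 ^ 2
        + 2 * max (lyapunov g σ₀ σ₁ A x - K) 0 * ∑ i, (-(3 / 4) * (A i * gradient g x i ^ 2))
        + J * (2 * (∑ i, A i * (σ₀ * gradient g x i ^ 2 + σ₁)) ^ 2))
      + ∑ i, (2 * max (lyapunov g σ₀ σ₁ A x - K) 0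
            * (A i * gradient g x i ^ 2 / 4 * (σ₀ * gradient g x i ^ 2 + σ₁)⁻¹ + c₃ * A i ^ 2)
          + J * (2 * (c₁ * ‖gradient g x‖ + c₂) ^ 2 * A i ^ 2))
          * (σ₀ * gradient g x i ^ 2 + σ₁) ≤
      max (lyapunov g σ₀ σ₁ A x - K) 0 ^ 2
        + 8 * L * c₄ * (2 * c₁ ^ 2 + 2 * (c₂ / δ) ^ 2 + c₄) * K * a
          * ∑ i, A i * gradient g x i ^ 2 := by
  have hgW := le_lyapunov (g := g) (x := x) hσ₀ hσ₁.le hA0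
  set W := lyapunov g σ₀ σ₁ A x
  set p := max (W - K) 0 with hp
  set Q := ∑ i, A i * gradient g x i ^ 2 with hQ
  have hp0 : 0 ≤ p := le_max_right _ _
  have hQ0 : 0 ≤ Q := Finset.sum_nonneg fun i _ => mul_nonneg (hA0 i) (sq_nonneg _)
  have hc₄0 : 0 ≤ c₄ := by rw [← hc₄]; positivity
  have hLpos := hg.pos
  set c₅ := 2 * c₁ ^ 2 + 2 * (c₂ / δ) ^ 2 with hc₅
  have hc₅0 : 0 ≤ c₅ := by positivity
  rcases lt_or_ge W (K / 2) with hW | hW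
  · have hp' : p = 0 := max_eq_right (by linarith)
    rw [hJ' hW, hp']
    simp only [mul_zero, zero_mul, zero_add, zero_pow two_ne_zero, Finset.sum_const_zero]
    positivity
  obtain ⟨hJ1, hx⟩ := hJ hW
  have hT : ∀ i, σ₀ * gradient g x i ^ 2 + σ₁ ≤ c₄ * gradient g x i ^ 2 := fun i => by
    have h1 : δ ^ 2 ≤ gradient g x i ^ 2 := by
      rw [← sq_abs (gradient g x i)]
      exact pow_le_pow_left₀ hδ.le (hx i).le 2
    have h2 : σ₁ ≤ σ₁ / δ ^ 2 * gradient g x i ^ 2 := by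
      rw [div_mul_eq_mul_div, le_div_iff₀ (by positivity)]
      gcongr
    rw [← hc₄]
    linarith
  have hT0 : ∀ i, 0 < σ₀ * gradient g x i ^ 2 + σ₁ := fun i => by positivity
  have hST : ∑ i, A i * (σ₀ * gradient g x i ^ 2 + σ₁) ≤ c₄ * Q := by
    rw [hQ, Finset.mul_sum]
    refine Finset.sum_le_sum fun i _ => ?_
    have := mul_le_mul_of_nonneg_left (hT i) (hA0 i)
    linarith
  have hST0 : 0 ≤ ∑ i, A i * (σ₀ * gradient g x i ^ 2 + σ₁) :=
    Finset.sum_nonneg fun i _ => mul_nonneg (hA0 i) (hT0 i).le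
  have hAT : ∑ i, A i ^ 2 * (σ₀ * gradient g x i ^ 2 + σ₁) ≤ a * (c₄ * Q) := by
    refine le_trans ?_ (mul_le_mul_of_nonneg_left hST ha)
    rw [Finset.mul_sum]
    refine Finset.sum_le_sum fun i _ => ?_
    rw [sq, mul_assoc]
    exact mul_le_mul_of_nonneg_right (hA i) (mul_nonneg (hA0 i) (hT0 i).le)
  have hnorm := EuclideanSpace.real_norm_sq_eq (gradient g x)
  have hgrad := norm_gradient_sq_le hg.pos hg.diff hg.nonneg hg.smooth x
  have hδn : δ ≤ ‖gradient g x‖ :=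
    (hx ⟨0, hd⟩).le.trans (by simpa using PiLp.norm_apply_le (gradient g x) ⟨0, hd⟩)
  have hM : (c₁ * ‖gradient g x‖ + c₂) ^ 2 ≤ c₅ * ‖gradient g x‖ ^ 2 := by
    have h1 : c₂ ≤ c₂ / δ * ‖gradient g x‖ := by
      rw [div_mul_eq_mul_div, le_div_iff₀ hδ]
      gcongr
    have h2 : c₁ * ‖gradient g x‖ + c₂ ≤ (c₁ + c₂ / δ) * ‖gradient g x‖ := by linarith
    refine (pow_le_pow_left₀ (by positivity) h2 2).trans ?_
    rw [mul_pow]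
    gcongr
    nlinarith [sq_nonneg (c₁ - c₂ / δ)]
  have hQW : Q ≤ a * (4 * L * W) := by
    calc Q ≤ ∑ i, a * gradient g x i ^ 2 := Finset.sum_le_sum fun i _ =>
          mul_le_mul_of_nonneg_right (hA i) (sq_nonneg _)
      _ = a * ‖gradient g x‖ ^ 2 := by rw [← Finset.mul_sum, hnorm]
      _ ≤ _ := by gcongr; exact hgrad.trans (by gcongr)
  have e : ∀ i, (2 * p * (A i * gradient g x i ^ 2 / 4 * (σ₀ * gradient g x i ^ 2 + σ₁)⁻¹
        + c₃ * A i ^ 2) + J * (2 * (c₁ * ‖gradient g x‖ + c₂) ^ 2 * A i ^ 2))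
          * (σ₀ * gradient g x i ^ 2 + σ₁) = p / 2 * (A i * gradient g x i ^ 2)
        + (2 * p * c₃ + 2 * (c₁ * ‖gradient g x‖ + c₂) ^ 2)
          * (A i ^ 2 * (σ₀ * gradient g x i ^ 2 + σ₁)) := fun i => by
    rw [hJ1]
    field_simp [(hT0 i).ne']
    ring
  rw [Finset.sum_congr rfl fun i _ => e i, Finset.sum_add_distrib, ← Finset.mul_sum,
    ← Finset.mul_sum, ← Finset.mul_sum, hJ1, ← hQ]
  have f1 : (2 * p * c₃ + 2 * (c₁ * ‖gradient g x‖ + c₂) ^ 2)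
      * ∑ i, A i ^ 2 * (σ₀ * gradient g x i ^ 2 + σ₁) ≤
      (2 * p * c₃ + 2 * (c₅ * (4 * L * W))) * (a * (c₄ * Q)) := by
    have hM' : (c₁ * ‖gradient g x‖ + c₂) ^ 2 ≤ c₅ * (4 * L * W) :=
      hM.trans (by gcongr; exact hgrad.trans (by gcongr))
    have hW0 := (hg.nonneg x).trans hgW
    exact mul_le_mul (by linarith) hAT
      (Finset.sum_nonneg fun i _ => mul_nonneg (sq_nonneg _) (hT0 i).le) (by positivity)
  have f2 : (∑ i, A i * (σ₀ * gradient g x i ^ 2 + σ₁)) ^ 2 ≤ c₄ ^ 2 * (a * (4 * L * W)) * Q := by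
    calc _ ≤ (c₄ * Q) ^ 2 := pow_le_pow_left₀ hST0 hST 2
      _ = c₄ ^ 2 * Q * Q := by ring
      _ ≤ _ := by gcongr
  have f3 := mul_le_mul_of_nonneg_right ha₂ (mul_nonneg hp0 hQ0)
  have f4 := mul_le_mul_of_nonneg_right ha₃ (mul_nonneg hp0 hQ0)
  have f5 : W ≤ p + K := by linarith [le_max_left (W - K) 0]
  have f6 := mul_le_mul_of_nonneg_left f5
    (show 0 ≤ 8 * L * c₄ * (c₅ + c₄) * a * Q by positivity)
  linarith

end Excess

theorem summable_of_eventually_le_sub_add {u b r : ℕ → ℝ} (hu : ∀ k, 0 ≤ u k) (hb : ∀ k, 0 ≤ b k)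
    (hr0 : ∀ k, 0 ≤ r k) (hr : Summable r)
    (h : ∀ᶠ k in atTop, u k ≤ b k - b (k + 1) + r k) : Summable u := by
  obtain ⟨N, hN⟩ := eventually_atTop.1 h
  rw [← summable_nat_add_iff N]
  refine summable_of_sum_range_le (c := b N + ∑' k, r (k + N)) (fun k => hu _) fun n => ?_
  have h1 : ∀ n, ∑ k ∈ Finset.range n, u (k + N) ≤
      b N - b (n + N) + ∑ k ∈ Finset.range n, r (k + N) := fun n => by
    induction n with
    | zero => simp
    | succ n ih =>
      rw [Finset.sum_range_succ, Finset.sum_range_succ, Nat.add_right_comm]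
      linarith [hN (n + N) (Nat.le_add_left _ _)]
  have h2 := ((summable_nat_add_iff N).2 hr).sum_le_tsum (Finset.range n) fun k _ => hr0 _
  linarith [h1 n, hb (n + N)]

theorem exists_eventually_le_of_eventually_le_add {b r : ℕ → ℝ} (hr0 : ∀ k, 0 ≤ r k)
    (hr : Summable r) (h : ∀ᶠ k in atTop, b (k + 1) ≤ b k + r k) :
    ∃ C, ∀ᶠ k in atTop, b k ≤ C := by
  obtain ⟨N, hN⟩ := eventually_atTop.1 h
  refine ⟨b N + ∑' k, r (k + N), eventually_atTop.2 ⟨N, fun k hk => ?_⟩⟩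
  obtain ⟨n, rfl⟩ := Nat.exists_eq_add_of_le' hk
  have h1 : b (n + N) ≤ b N + ∑ k ∈ Finset.range n, r (k + N) := by
    clear hk
    induction n with
    | zero => simp
    | succ n ih =>
      rw [Finset.sum_range_succ, Nat.add_right_comm]
      linarith [hN (n + N) (Nat.le_add_left _ _)]
  have h2 := ((summable_nat_add_iff N).2 hr).sum_le_tsum (Finset.range n) fun k _ => hr0 _
  linarith

theorem tendsto_one_div_mul_sqrt_succ (ε : ℝ) :
    Tendsto (fun k : ℕ => 1 / (ε * √(k + 1))) atTop (nhds 0) := by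
  have h : Tendsto (fun k : ℕ => √((k : ℝ) + 1)) atTop atTop :=
    Real.tendsto_sqrt_atTop.comp (tendsto_atTop_add_const_right _ _ tendsto_natCast_atTop_atTop)
  simpa [mul_comm] using h.inv_tendsto_atTop.const_mul ε⁻¹

theorem summable_one_div_sqrt_succ_pow_three :
    Summable fun k : ℕ => 1 / √((k : ℝ) + 1) ^ 3 := by
  have h := (summable_nat_add_iff 1).2
    (Real.summable_one_div_nat_rpow.2 (show (1 : ℝ) < 3 / 2 by norm_num))
  refine h.congr fun k => ?_
  rw [Real.sqrt_eq_rpow, ← Real.rpow_natCast, ← Real.rpow_mul (by positivity)]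
  norm_num

namespace IsPreconditionedSGD

variable {d : ℕ} {Ω : Type*} {m0 : MeasurableSpace Ω} {P : Measure Ω}
  {ℱ : Filtration ℕ m0} {g : EuclideanSpace ℝ (Fin d) → ℝ} {L σ₀ σ₁ ε : ℝ}
  {x : ℕ → Ω → EuclideanSpace ℝ (Fin d)} {X A : ℕ → Ω → Fin d → ℝ}

theorem boundedMeasurable_energy (h : IsPreconditionedSGD P ℱ g σ₀ σ₁ ε x X A)
    (hg : Continuous (gradient g)) (k : ℕ) :
    BoundedMeasurable (ℱ k) fun ω => ∑ i, A k ω i * gradient g (x k ω) i ^ 2 :=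
  BoundedMeasurable.sum fun i =>
    (h.boundedMeasurable_A k i).mul ((h.boundedMeasurable_gradient hg k i).pow 2)

theorem A_le_inv (h : IsPreconditionedSGD P ℱ g σ₀ σ₁ ε x X A) (hε : 0 < ε) (k : ℕ) (ω : Ω)
    (i : Fin d) : A k ω i ≤ 1 / ε := by
  refine (h.A_le k ω i).trans (one_div_le_one_div_of_le hε ?_)
  exact le_mul_of_one_le_right hε.le (Real.one_le_sqrt.2 (by linarith [k.cast_nonneg (α := ℝ)]))

theorem energy_nonneg (h : IsPreconditionedSGD P ℱ g σ₀ σ₁ ε x X A) (k : ℕ) (ω : Ω) :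
    0 ≤ ∑ i, A k ω i * gradient g (x k ω) i ^ 2 :=
  Finset.sum_nonneg fun i _ => mul_nonneg (h.A_nonneg k ω i) (sq_nonneg _)

theorem boundedMeasurable_inv_moment (h : IsPreconditionedSGD P ℱ g σ₀ σ₁ ε x X A)
    (hg : Continuous (gradient g)) (hσ₀ : 0 ≤ σ₀) (hσ₁ : 0 < σ₁) (k : ℕ) (i : Fin d) :
    BoundedMeasurable (ℱ k) fun ω => (σ₀ * gradient g (x k ω) i ^ 2 + σ₁)⁻¹ :=
  (h.boundedMeasurable_moment hg k i).inv hσ₁ fun _ => le_add_of_nonneg_left (by positivity)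

variable [IsProbabilityMeasure P]

theorem eventually_integral_lyapunov_succ_le (h : IsPreconditionedSGD P ℱ g σ₀ σ₁ ε x X A)
    (hg : IsSmoothObjective g L) (hσ₀ : 0 ≤ σ₀) (hσ₁ : 0 < σ₁) (hε : 0 < ε) :
    ∃ C, 0 ≤ C ∧ ∀ᶠ k : ℕ in atTop,
      ∫ ω, lyapunov g σ₀ σ₁ (A (k + 1) ω) (x (k + 1) ω) ∂P ≤
        ∫ ω, lyapunov g σ₀ σ₁ (A k ω) (x k ω) ∂P
          - 1 / 4 * ∫ ω, ∑ i, A k ω i * gradient g (x k ω) i ^ 2 ∂P + C * (1 / √(k + 1)) ^ 2 := by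
  have hLpos := hg.pos
  have hgc := hg.continuous_gradient
  set c := L + (4 * σ₀ ^ 2 + σ₀) * (1 / ε) * L ^ 2 with hc
  have hc0 : 0 ≤ c := by positivity
  refine ⟨c * d * σ₁ / ε ^ 2, by positivity, ?_⟩
  have hev : ∀ᶠ k : ℕ in atTop, c * σ₀ * (1 / (ε * √(k + 1))) < 1 / 4 := by
    have := (tendsto_one_div_mul_sqrt_succ ε).const_mul (c * σ₀)
    rw [mul_zero] at this
    exact this.eventually_lt_const (by norm_num)
  filter_upwards [hev] with k hk
  set a := 1 / (ε * √((k : ℝ) + 1)) with ha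
  have ha0 : 0 ≤ a := by positivity
  have hW := fun k => h.boundedMeasurable_lyapunov hg.diff.continuous hgc k
  have hQ := h.boundedMeasurable_energy hgc k
  have h1 := h.integral_le_of_le hgc (k := k)
    (u := fun ω => lyapunov g σ₀ σ₁ (A k ω) (x k ω)
      - 3 / 4 * ∑ i, A k ω i * gradient g (x k ω) i ^ 2)
    (p := fun i ω => A k ω i * gradient g (x k ω) i)
    (r := fun i ω => A k ω i * gradient g (x k ω) i ^ 2 / 4
        * (σ₀ * gradient g (x k ω) i ^ 2 + σ₁)⁻¹ + c * A k ω i ^ 2)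
    ((hW (k + 1)).mono (ℱ.le _)).integrable
    ((hW k).sub ((BoundedMeasurable.const _).mul hQ))
    (fun i => (h.boundedMeasurable_A k i).mul (h.boundedMeasurable_gradient hgc k i))
    (fun i => by
      have hA := h.boundedMeasurable_A k i
      have hh := h.boundedMeasurable_gradient hgc k i
      simpa only [div_eq_mul_inv] using
        (((hA.mul (hh.pow 2)).mul (BoundedMeasurable.const _)).mul
          (h.boundedMeasurable_inv_moment hgc hσ₀ hσ₁ k i)).add
        ((BoundedMeasurable.const c).mul (hA.pow 2)))
    (fun i ω => by
      have := h.A_nonneg k ω i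
      positivity)
    (fun ω => by
      refine (lyapunov_step_le hg.pos hσ₀ hσ₁ (by positivity) hg.diff hg.smooth
        (h.A_nonneg _ ω) (h.A_succ_le k ω) (h.A_le_inv hε k ω) (h.x_succ k ω)).trans_eq ?_
      rw [← hc, sub_add_eq_add_sub, add_sub_assoc]
      congr 1
      rw [Finset.mul_sum, ← Finset.sum_sub_distrib]
      exact Finset.sum_congr rfl fun i _ => by ring)
  refine h1.trans ?_
  rw [← integral_const_mul, ← integral_sub ((hW k).mono (ℱ.le _)).integrable
    (((BoundedMeasurable.const _).mul hQ).mono (ℱ.le _)).integrable]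
  have h2 : c * d * σ₁ / ε ^ 2 * (1 / √((k : ℝ) + 1)) ^ 2 = ∫ _, c * d * σ₁ * a ^ 2 ∂P := by
    rw [integral_const, probReal_univ, one_smul, ha]
    field_simp
  rw [h2, ← integral_add (((hW k).sub ((BoundedMeasurable.const _).mul hQ)).mono
    (ℱ.le _)).integrable (integrable_const _)]
  refine integral_mono ?_ ?_ fun ω => ?_
  · refine (BoundedMeasurable.mono ?_ (ℱ.le k)).integrable
    refine ((hW k).sub ((BoundedMeasurable.const _).mul hQ)).add
      (BoundedMeasurable.sum fun i => ?_)
    have hA := h.boundedMeasurable_A k i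
    have hh := h.boundedMeasurable_gradient hgc k i
    simpa only [div_eq_mul_inv] using
      ((((hA.mul (hh.pow 2)).mul (BoundedMeasurable.const _)).mul
          (h.boundedMeasurable_inv_moment hgc hσ₀ hσ₁ k i)).add
        ((BoundedMeasurable.const c).mul (hA.pow 2))).mul (h.boundedMeasurable_moment hgc k i)
  · exact ((((hW k).sub ((BoundedMeasurable.const _).mul hQ)).add
      (BoundedMeasurable.const _)).mono (ℱ.le k)).integrable
  · have h3 : ∀ i, (A k ω i * gradient g (x k ω) i ^ 2 / 4
        * (σ₀ * gradient g (x k ω) i ^ 2 + σ₁)⁻¹ + c * A k ω i ^ 2)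
          * (σ₀ * gradient g (x k ω) i ^ 2 + σ₁) ≤
        1 / 2 * (A k ω i * gradient g (x k ω) i ^ 2) + c * σ₁ * a ^ 2 := fun i => by
      have hT : 0 < σ₀ * gradient g (x k ω) i ^ 2 + σ₁ := by positivity
      have hA0 := h.A_nonneg k ω i
      have hAa : A k ω i ≤ a := h.A_le k ω i
      have e : (A k ω i * gradient g (x k ω) i ^ 2 / 4
        * (σ₀ * gradient g (x k ω) i ^ 2 + σ₁)⁻¹ + c * A k ω i ^ 2)
          * (σ₀ * gradient g (x k ω) i ^ 2 + σ₁) =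
          A k ω i * gradient g (x k ω) i ^ 2 / 4
          + c * σ₀ * A k ω i * (A k ω i * gradient g (x k ω) i ^ 2) + c * σ₁ * A k ω i ^ 2 := by
        field_simp
        ring
      rw [e]
      have e1 : c * σ₁ * A k ω i ^ 2 ≤ c * σ₁ * a ^ 2 := by gcongr
      have e2 : c * σ₀ * A k ω i ≤ 1 / 4 := (by gcongr : _ ≤ c * σ₀ * a).trans hk.le
      have e3 := mul_le_mul_of_nonneg_right e2
        (show 0 ≤ A k ω i * gradient g (x k ω) i ^ 2 by positivity)
      linarith
    have h4 := Finset.sum_le_sum fun i (_ : i ∈ Finset.univ) => h3 i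
    rw [Finset.sum_add_distrib, ← Finset.mul_sum] at h4
    simp only [Finset.sum_const, Finset.card_univ, Fintype.card_fin, nsmul_eq_mul] at h4
    linarith

/-- The preconditioned gradient energy is summable in expectation with weights `1 / √k`. -/
theorem summable_integral_energy (h : IsPreconditionedSGD P ℱ g σ₀ σ₁ ε x X A)
    (hg : IsSmoothObjective g L) (hσ₀ : 0 ≤ σ₀) (hσ₁ : 0 < σ₁) (hε : 0 < ε) :
    Summable fun k : ℕ =>
      1 / √(k + 1) * ∫ ω, ∑ i, A k ω i * gradient g (x k ω) i ^ 2 ∂P := by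
  obtain ⟨C, hC, hev⟩ := h.eventually_integral_lyapunov_succ_le hg hσ₀ hσ₁ hε
  have hW0 : ∀ k, 0 ≤ ∫ ω, lyapunov g σ₀ σ₁ (A k ω) (x k ω) ∂P := fun k =>
    integral_nonneg fun ω => (hg.nonneg _).trans (le_lyapunov hσ₀ hσ₁.le (h.A_nonneg k ω))
  refine summable_of_eventually_le_sub_add
    (b := fun k => 4 * (1 / √((k : ℝ) + 1) * ∫ ω, lyapunov g σ₀ σ₁ (A k ω) (x k ω) ∂P))
    (r := fun k => 4 * C * (1 / √((k : ℝ) + 1) ^ 3))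
    (fun k => mul_nonneg (by positivity) (integral_nonneg (h.energy_nonneg k)))
    (fun k => mul_nonneg (by norm_num) (mul_nonneg (by positivity) (hW0 k)))
    (fun k => by positivity) (summable_one_div_sqrt_succ_pow_three.mul_left _) ?_
  filter_upwards [hev] with k hk
  have h1 : 1 / √(((k + 1 : ℕ) : ℝ) + 1) ≤ 1 / √((k : ℝ) + 1) := by
    push_cast
    gcongr
    linarith
  have h2 := mul_le_mul_of_nonneg_right h1 (hW0 (k + 1))
  have h3 := mul_le_mul_of_nonneg_left hk (show 0 ≤ 1 / √((k : ℝ) + 1) by positivity)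
  have h4 : 1 / √((k : ℝ) + 1) ^ 3 = 1 / √((k : ℝ) + 1) * (1 / √((k : ℝ) + 1)) ^ 2 := by
    field_simp
  rw [h4]
  linarith

end IsPreconditionedSGD

theorem exists_forall_le_imp_of_cobounded {d : ℕ} {g : EuclideanSpace ℝ (Fin d) → ℝ} {δ : ℝ}
    (hg : Continuous g)
    (hflat : ∀ i, ∀ᶠ y in Bornology.cobounded (EuclideanSpace ℝ (Fin d)), δ < |gradient g y i|) :
    ∃ K₀, 0 ≤ K₀ ∧ ∀ y, K₀ ≤ g y → ∀ i, δ < |gradient g y i| := by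
  have hb : Bornology.IsBounded {y | ∀ i, δ < |gradient g y i|}ᶜ :=
    Bornology.isBounded_def.2 (by rw [compl_compl]; exact eventually_all.2 hflat)
  obtain ⟨C, hC⟩ := hb.isCompact_closure.exists_bound_of_continuousOn hg.continuousOn
  refine ⟨|C| + 1, by positivity, fun y hy => ?_⟩
  by_contra hcon
  have := hC y (subset_closure hcon)
  rw [Real.norm_eq_abs] at this
  linarith [le_abs_self (g y), le_abs_self C]

namespace IsPreconditionedSGD

variable {d : ℕ} {Ω : Type*} {m0 : MeasurableSpace Ω} {P : Measure Ω} [IsProbabilityMeasure P]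
  {ℱ : Filtration ℕ m0} {g : EuclideanSpace ℝ (Fin d) → ℝ} {L σ₀ σ₁ ε δ : ℝ}
  {x : ℕ → Ω → EuclideanSpace ℝ (Fin d)} {X A : ℕ → Ω → Fin d → ℝ}

theorem exists_integral_sq_excess_le (h : IsPreconditionedSGD P ℱ g σ₀ σ₁ ε x X A)
    (hg : IsSmoothObjective g L) (hσ₀ : 0 ≤ σ₀) (hσ₁ : 0 < σ₁) (hε : 0 < ε) (hd : 0 < d)
    (hδ : 0 < δ)
    (hflat : ∀ i, ∀ᶠ y in Bornology.cobounded (EuclideanSpace ℝ (Fin d)), δ < |gradient g y i|) :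
    ∃ K C, 0 ≤ K ∧ ∀ᶠ k in atTop,
      ∫ ω, max (lyapunov g σ₀ σ₁ (A k ω) (x k ω) - K) 0 ^ 2 ∂P ≤ C := by
  have hLpos := hg.pos
  have hgc := hg.continuous_gradient
  obtain ⟨K₀, hK₀, hK₀'⟩ := exists_forall_le_imp_of_cobounded hg.diff.continuous hflat
  set K := 40 * L * d + 3 + 12 / 5 * K₀ with hK
  have hK0 : 0 ≤ K := by positivity
  set c₁ := 1 + 2 * L * σ₀ * (1 / ε) with hc₁
  set c₂ := (L + L ^ 2 * σ₀ * (1 / ε)) * √d with hc₂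
  set c₃ := L + (4 * σ₀ ^ 2 + σ₀) * (1 / ε) * L ^ 2 with hc₃
  set c₄ := σ₀ + σ₁ / δ ^ 2 with hc₄
  set c₆ := 8 * L * c₄ * (2 * c₁ ^ 2 + 2 * (c₂ / δ) ^ 2 + c₄) with hc₆
  have hc₆0 : 0 ≤ c₆ := by positivity
  have hsmall : ∀ c b : ℝ, 0 < b → ∀ᶠ k : ℕ in atTop, c * (1 / (ε * √(k + 1))) ≤ b :=
    fun c b hb => by
      have := (tendsto_one_div_mul_sqrt_succ ε).const_mul c
      rw [mul_zero] at this
      exact (this.eventually_lt_const hb).mono fun _ => le_of_lt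
  obtain ⟨C, hC⟩ := exists_eventually_le_of_eventually_le_add
    (b := fun k => ∫ ω, max (lyapunov g σ₀ σ₁ (A k ω) (x k ω) - K) 0 ^ 2 ∂P)
    (r := fun k => c₆ * K / ε * (1 / √((k : ℝ) + 1)
      * ∫ ω, ∑ i, A k ω i * gradient g (x k ω) i ^ 2 ∂P))
    (fun k => mul_nonneg (by positivity)
      (mul_nonneg (by positivity) (integral_nonneg (h.energy_nonneg k))))
    ((h.summable_integral_energy hg hσ₀ hσ₁ hε).mul_left _) (by
      filter_upwards [hsmall (4 * L * σ₀) (1 / 5) (by norm_num),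
        hsmall (d * σ₁) 1 one_pos, hsmall (c₃ * c₄) (1 / 4) (by norm_num),
        hsmall c₆ (1 / 2) (by norm_num)] with k ha₀ ha₁ ha₂ ha₃
      have ha : 0 ≤ 1 / (ε * √((k : ℝ) + 1)) := by positivity
      set a := 1 / (ε * √((k : ℝ) + 1)) with ha_def
      have hAα := h.A_le_inv hε k
      have hW := fun k => h.boundedMeasurable_lyapunov hg.diff.continuous hgc k
      have hQ := h.boundedMeasurable_energy hgc k
      have hA := fun i => h.boundedMeasurable_A k i
      have hh := fun i => h.boundedMeasurable_gradient hgc k i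
      have hT := fun i => h.boundedMeasurable_moment hgc k i
      have hn : BoundedMeasurable (ℱ k) fun ω => ‖gradient g (x k ω)‖ := h.comp_x k hgc.norm
      have hcst : ∀ c, BoundedMeasurable (ℱ k) fun _ => c := fun c => BoundedMeasurable.const c
      have hp : ∀ k, BoundedMeasurable (ℱ k)
          fun ω => max (lyapunov g σ₀ σ₁ (A k ω) (x k ω) - K) 0 := fun k =>
        ((hW k).sub (BoundedMeasurable.const K)).max (BoundedMeasurable.const 0)
      set s := {ω | K / 2 ≤ lyapunov g σ₀ σ₁ (A k ω) (x k ω)} with hs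
      have hsm : MeasurableSet[ℱ k] s :=
        (hW k).1.measurable measurableSet_Ici
      set J := s.indicator fun _ => (1 : ℝ) with hJ
      have hJm : BoundedMeasurable (ℱ k) J := (hcst 1).indicator hsm
      have hJ1 : ∀ ω, K / 2 ≤ lyapunov g σ₀ σ₁ (A k ω) (x k ω) → J ω = 1 := fun ω hω =>
        Set.indicator_of_mem (s := s) hω _
      have hJ0 : ∀ ω, 0 ≤ J ω := fun ω => Set.indicator_nonneg (fun _ _ => zero_le_one) ω
      have hr : ∀ i, BoundedMeasurable (ℱ k) fun ω =>
          2 * max (lyapunov g σ₀ σ₁ (A k ω) (x k ω) - K) 0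
            * (A k ω i * gradient g (x k ω) i ^ 2 / 4 * (σ₀ * gradient g (x k ω) i ^ 2 + σ₁)⁻¹
              + c₃ * A k ω i ^ 2)
          + J ω * (2 * (c₁ * ‖gradient g (x k ω)‖ + c₂) ^ 2 * A k ω i ^ 2) := fun i => by
        simpa only [div_eq_mul_inv] using (((hcst 2).mul (hp k)).mul
          (((((hA i).mul ((hh i).pow 2)).mul (hcst _)).mul
            (h.boundedMeasurable_inv_moment hgc hσ₀ hσ₁ k i)).add
              ((hcst c₃).mul ((hA i).pow 2)))).add
          (hJm.mul (((hcst 2).mul ((((hcst c₁).mul hn).add (hcst c₂)).pow 2)).mul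
            ((hA i).pow 2)))
      have hu : BoundedMeasurable (ℱ k) fun ω =>
          max (lyapunov g σ₀ σ₁ (A k ω) (x k ω) - K) 0 ^ 2
            + 2 * max (lyapunov g σ₀ σ₁ (A k ω) (x k ω) - K) 0
              * ∑ i, (-(3 / 4) * (A k ω i * gradient g (x k ω) i ^ 2))
            + J ω * (2 * (∑ i, A k ω i * (σ₀ * gradient g (x k ω) i ^ 2 + σ₁)) ^ 2) :=
        (((hp k).pow 2).add (((hcst 2).mul (hp k)).mul (BoundedMeasurable.sum fun i =>
          (hcst _).mul ((hA i).mul ((hh i).pow 2))))).add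
          (hJm.mul ((hcst 2).mul ((BoundedMeasurable.sum fun i => (hA i).mul (hT i)).pow 2)))
      refine (h.integral_le_of_le hgc (k := k) (((hp (k + 1)).pow 2).mono (ℱ.le _)).integrable hu
        (p := fun i ω => 2 * max (lyapunov g σ₀ σ₁ (A k ω) (x k ω) - K) 0
          * (A k ω i * gradient g (x k ω) i))
        (fun i => ((hcst 2).mul (hp k)).mul ((hA i).mul (hh i))) hr (fun i ω => ?_)
        (fun ω => ?_)).trans ?_
      · have := h.A_nonneg k ω i
        have := hJ0 ω
        have : 0 ≤ max (lyapunov g σ₀ σ₁ (A k ω) (x k ω) - K) 0 := le_max_right _ _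
        positivity
      · exact sq_posPart_lyapunov_step_le hg hσ₀ hσ₁ (by positivity) (h.A_nonneg _ ω)
          (h.A_succ_le k ω) (hAα ω) (h.x_succ k ω) (h.A_le k ω) ha₀ ha₁ ha
          (h.norm_step_le k ω) (by linarith) (hJ0 ω) (hJ1 ω)
      · have hI : ∫ ω, max (lyapunov g σ₀ σ₁ (A k ω) (x k ω) - K) 0 ^ 2 ∂P
            + c₆ * K / ε * (1 / √((k : ℝ) + 1)
              * ∫ ω, ∑ i, A k ω i * gradient g (x k ω) i ^ 2 ∂P) =
            ∫ ω, (max (lyapunov g σ₀ σ₁ (A k ω) (x k ω) - K) 0 ^ 2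
              + c₆ * K * a * ∑ i, A k ω i * gradient g (x k ω) i ^ 2) ∂P := by
          rw [integral_add (((hp k).pow 2).mono (ℱ.le _)).integrable
            (((hcst _).mul hQ).mono (ℱ.le _)).integrable, integral_const_mul, ha_def]
          congr 1
          field_simp
        rw [hI]
        refine integral_mono ((hu.add (BoundedMeasurable.sum fun i =>
          (hr i).mul (hT i))).mono (ℱ.le _)).integrable
          ((((hp k).pow 2).add ((hcst _).mul hQ)).mono (ℱ.le _)).integrable fun ω => ?_
        refine sq_excess_drift_le hg hd hσ₀ hσ₁ hδ (by positivity) (by positivity)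
          (by positivity) hc₄.symm (h.A_nonneg k ω) (h.A_le k ω) ha (by linarith) ha₃ hK0
          (fun hlt => Set.indicator_of_notMem (s := s) (not_le.2 hlt) _)
          (fun hle => ⟨hJ1 ω hle, hK₀' _ ?_⟩)
        have := lyapunov_le (x := x k ω) hg hσ₀ hσ₁.le (h.A_le k ω) ha₀ ha₁ ha
        have hLd : 0 ≤ L * d := by positivity
        linarith)
  exact ⟨K, C, hK0, hC⟩

theorem exists_integral_norm_gradient_pow_four_le (h : IsPreconditionedSGD P ℱ g σ₀ σ₁ ε x X A)
    (hg : IsSmoothObjective g L) (hσ₀ : 0 ≤ σ₀) (hσ₁ : 0 < σ₁) (hε : 0 < ε) (hd : 0 < d)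
    (hδ : 0 < δ)
    (hflat : ∀ i, ∀ᶠ y in Bornology.cobounded (EuclideanSpace ℝ (Fin d)), δ < |gradient g y i|) :
    ∃ C, ∀ᶠ k in atTop, ∫ ω, ‖gradient g (x k ω)‖ ^ 4 ∂P ≤ C := by
  obtain ⟨K, C, hK, hC⟩ := h.exists_integral_sq_excess_le hg hσ₀ hσ₁ hε hd hδ hflat
  have hLpos := hg.pos
  refine ⟨32 * L ^ 2 * (C + K ^ 2), hC.mono fun k hk => ?_⟩
  have hp : BoundedMeasurable (ℱ k) fun ω => max (lyapunov g σ₀ σ₁ (A k ω) (x k ω) - K) 0 :=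
    ((h.boundedMeasurable_lyapunov hg.diff.continuous hg.continuous_gradient k).sub
      (BoundedMeasurable.const K)).max (BoundedMeasurable.const 0)
  have hI : ∫ ω, 32 * L ^ 2 * (max (lyapunov g σ₀ σ₁ (A k ω) (x k ω) - K) 0 ^ 2 + K ^ 2) ∂P =
      32 * L ^ 2 * (∫ ω, max (lyapunov g σ₀ σ₁ (A k ω) (x k ω) - K) 0 ^ 2 ∂P + K ^ 2) := by
    rw [integral_const_mul, integral_add ((hp.pow 2).mono (ℱ.le _)).integrable
      (integrable_const _), integral_const, probReal_univ, one_smul]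
  refine (integral_mono (((h.comp_x k hg.continuous_gradient.norm).pow 4).mono
    (ℱ.le _)).integrable (((BoundedMeasurable.const _).mul ((hp.pow 2).add
      (BoundedMeasurable.const _))).mono (ℱ.le _)).integrable fun ω => ?_).trans
    (hI.trans_le (by gcongr))
  have h1 := norm_gradient_sq_le hg.pos hg.diff hg.nonneg hg.smooth (x k ω)
  have h2 := le_lyapunov (g := g) (x := x k ω) hσ₀ hσ₁.le (h.A_nonneg k ω)
  set p := max (lyapunov g σ₀ σ₁ (A k ω) (x k ω) - K) 0
  have h3 : g (x k ω) ≤ p + K := by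
    linarith [le_max_left (lyapunov g σ₀ σ₁ (A k ω) (x k ω) - K) 0]
  have h4 := pow_le_pow_left₀ (sq_nonneg _) h1 2
  have h5 := pow_le_pow_left₀ (hg.nonneg _) h3 2
  have h6 : (p + K) ^ 2 ≤ 2 * (p ^ 2 + K ^ 2) := by nlinarith [sq_nonneg (p - K)]
  have h7 := mul_le_mul_of_nonneg_left (h5.trans h6) (show 0 ≤ 16 * L ^ 2 by positivity)
  calc ‖gradient g (x k ω)‖ ^ 4 = (‖gradient g (x k ω)‖ ^ 2) ^ 2 := by ring
    _ ≤ _ := by linarith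

end IsPreconditionedSGD

theorem ae_summable_of_summable_integral {Ω : Type*} {m0 : MeasurableSpace Ω} {P : Measure Ω}
    {f : ℕ → Ω → ℝ} (hf : ∀ k, Integrable (f k) P) (hf0 : ∀ k ω, 0 ≤ f k ω)
    (hs : Summable fun k => ∫ ω, f k ω ∂P) : ∀ᵐ ω ∂P, Summable fun k => f k ω := by
  have h1 : ∫⁻ ω, ∑' k, ENNReal.ofReal (f k ω) ∂P ≠ ⊤ := by
    rw [lintegral_tsum fun k => (hf k).aemeasurable.ennreal_ofReal]
    convert hs.tsum_ofReal_ne_top using 3 with k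
    rw [ofReal_integral_eq_lintegral_ofReal (hf k) (Eventually.of_forall (hf0 k))]
  filter_upwards [ae_lt_top' (AEMeasurable.tsum fun k =>
    (hf k).aemeasurable.ennreal_ofReal) h1] with ω hω
  simpa only [ENNReal.toReal_ofReal (hf0 _ ω)] using ENNReal.summable_toReal hω.ne

/-- Sums of square-integrable martingale differences with summable variances converge. -/
theorem ae_cauchySeq_sum_of_summable_integral_sq {Ω : Type*} {m0 : MeasurableSpace Ω}
    {P : Measure Ω} [IsProbabilityMeasure P] {ℱ : Filtration ℕ m0} {D : ℕ → Ω → ℝ}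
    (hm : ∀ k, StronglyMeasurable[ℱ (k + 1)] (D k)) (hD : ∀ k, MemLp (D k) 2 P)
    (hcond : ∀ k, P[D k | ℱ k] =ᵐ[P] 0) (hs : Summable fun k => ∫ ω, D k ω ^ 2 ∂P) :
    ∀ᵐ ω ∂P, CauchySeq fun n => ∑ k ∈ Finset.range n, D k ω := by
  set M : ℕ → Ω → ℝ := fun n ω => ∑ k ∈ Finset.range n, D k ω with hM
  have hMLp : ∀ n, MemLp (M n) 2 P := fun n => memLp_finsetSum _ fun k _ => hD k
  have hadp : StronglyAdapted ℱ M := fun n =>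
    Finset.stronglyMeasurable_fun_sum _ fun k hk =>
      (hm k).mono (ℱ.mono (Finset.mem_range.1 hk))
  have hsucc : ∀ n, M (n + 1) = M n + D n := fun n => by
    ext ω
    simp only [hM, Finset.sum_range_succ, Pi.add_apply]
  have hmart : Martingale M ℱ P :=
    martingale_of_condExp_sub_eq_zero_nat hadp (fun n => (hMLp n).integrable one_le_two)
      fun n => by rw [hsucc, add_sub_cancel_left]; exact hcond n
  have horth : ∀ n, ∫ ω, M n ω * D n ω ∂P = 0 := fun n => by
    have hint : Integrable (M n * D n) P := (hMLp n).integrable_mul (hD n)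
    have h1 := condExp_mul_of_stronglyMeasurable_left (hadp n) hint ((hD n).integrable one_le_two)
    calc ∫ ω, M n ω * D n ω ∂P = ∫ ω, (P[M n * D n | ℱ n]) ω ∂P :=
          (integral_condExp (ℱ.le n)).symm
      _ = ∫ _, (0 : ℝ) ∂P := integral_congr_ae (by
          filter_upwards [h1, hcond n] with ω h1 h2
          rw [h1, Pi.mul_apply, h2, Pi.zero_apply, mul_zero])
      _ = 0 := integral_zero _ _
  have hsq : ∀ n, ∫ ω, M n ω ^ 2 ∂P = ∑ k ∈ Finset.range n, ∫ ω, D k ω ^ 2 ∂P := fun n => by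
    induction n with
    | zero => simp [hM]
    | succ n ih =>
      rw [Finset.sum_range_succ, ← ih]
      have hint : Integrable (fun ω => M n ω * D n ω) P := (hMLp n).integrable_mul (hD n)
      have e : ∀ ω, M (n + 1) ω ^ 2 = M n ω ^ 2 + 2 * (M n ω * D n ω) + D n ω ^ 2 := fun ω => by
        rw [hsucc, Pi.add_apply]
        ring
      have h2 : Integrable (fun ω => M n ω ^ 2 + 2 * (M n ω * D n ω)) P :=
        (hMLp n).integrable_sq.add (hint.const_mul 2)
      simp only [e]
      rw [integral_add h2 (hD n).integrable_sq,
        integral_add (hMLp n).integrable_sq (hint.const_mul 2), integral_const_mul, horth]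
      ring
  have hbdd : ∀ n, eLpNorm (M n) 1 P ≤
      ((1 + ∑' k, ∫ ω, D k ω ^ 2 ∂P).toNNReal : ENNReal) := fun n => by
    have hi := (hMLp n).integrable one_le_two
    rw [eLpNorm_one_eq_lintegral_enorm, ← ofReal_integral_norm_eq_lintegral_enorm hi]
    refine ENNReal.ofReal_le_ofReal ?_
    calc ∫ ω, ‖M n ω‖ ∂P ≤ ∫ ω, (1 + M n ω ^ 2) ∂P :=
          integral_mono hi.norm ((integrable_const 1).add (hMLp n).integrable_sq) fun ω => by
            rw [Real.norm_eq_abs, ← sq_abs]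
            nlinarith [sq_nonneg (|M n ω| - 1), abs_nonneg (M n ω)]
      _ = 1 + ∑ k ∈ Finset.range n, ∫ ω, D k ω ^ 2 ∂P := by
          rw [integral_add (integrable_const 1) (hMLp n).integrable_sq, hsq, integral_const,
            probReal_univ, one_smul]
      _ ≤ _ := by
          gcongr
          exact hs.sum_le_tsum _ fun k _ => integral_nonneg fun ω => sq_nonneg _
  filter_upwards [hmart.submartingale.exists_ae_tendsto_of_bdd hbdd] with ω ⟨c, hc⟩
  exact hc.cauchySeq

namespace IsPreconditionedSGD

variable {d : ℕ} {Ω : Type*} {m0 : MeasurableSpace Ω} {P : Measure Ω} [IsProbabilityMeasure P]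
  {ℱ : Filtration ℕ m0} {g : EuclideanSpace ℝ (Fin d) → ℝ} {σ₀ σ₁ ε : ℝ}
  {x : ℕ → Ω → EuclideanSpace ℝ (Fin d)} {X A : ℕ → Ω → Fin d → ℝ}

theorem ae_summable_mul_sq (h : IsPreconditionedSGD P ℱ g σ₀ σ₁ ε x X A)
    (hg : Continuous (gradient g)) (i : Fin d) {f u : ℕ → Ω → ℝ}
    (hf : ∀ k, BoundedMeasurable (ℱ k) (f k)) (hf0 : ∀ k ω, 0 ≤ f k ω)
    (hu : ∀ k, Integrable (u k) P)
    (hfu : ∀ k ω, f k ω * (σ₀ * gradient g (x k ω) i ^ 2 + σ₁) ≤ u k ω)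
    (hs : Summable fun k => ∫ ω, u k ω ∂P) :
    ∀ᵐ ω ∂P, Summable fun k => f k ω * X k ω i ^ 2 :=
  ae_summable_of_summable_integral
    (fun k => ((hf k).mono (ℱ.le k)).integrable_mul (h.X_sq_int k i))
    (fun k ω => mul_nonneg (hf0 k ω) (sq_nonneg _))
    (hs.of_nonneg_of_le (fun k => integral_nonneg fun ω => mul_nonneg (hf0 k ω) (sq_nonneg _))
      fun k => (h.integral_mul_sq_le hg i (hf k) (hf0 k)).trans
        (integral_mono (((hf k).mul (h.boundedMeasurable_moment hg k i)).mono (ℱ.le k)).integrable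
          (hu k) (hfu k)))

theorem ae_cauchySeq_noise (h : IsPreconditionedSGD P ℱ g σ₀ σ₁ ε x X A)
    (hg : Continuous (gradient g)) (i : Fin d) {f u : ℕ → Ω → ℝ}
    (hf : ∀ k, BoundedMeasurable (ℱ k) (f k)) (hu : ∀ k, Integrable (u k) P)
    (hfu : ∀ k ω, f k ω ^ 2 * ((σ₀ + 1) * gradient g (x k ω) i ^ 2 + σ₁) ≤ u k ω)
    (hs : Summable fun k => ∫ ω, u k ω ∂P) :
    ∀ᵐ ω ∂P, CauchySeq fun n =>
      ∑ k ∈ Finset.range n, f k ω * (gradient g (x k ω) i - X k ω i) := by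
  have hh := fun k => h.boundedMeasurable_gradient hg k i
  have hN : ∀ k, MemLp (fun ω => gradient g (x k ω) i - X k ω i) 2 P := fun k => by
    refine MemLp.sub ?_ (h.X_memLp k i)
    exact (memLp_two_iff_integrable_sq ((hh k).1.mono (ℱ.le k)).aestronglyMeasurable).2
      (((hh k).pow 2).mono (ℱ.le k)).integrable
  have hmeas : ∀ k, StronglyMeasurable[ℱ (k + 1)]
      fun ω => f k ω * (gradient g (x k ω) i - X k ω i) := fun k =>
    ((hf k).1.mono (ℱ.mono k.le_succ)).mul (((hh k).1.mono (ℱ.mono k.le_succ)).sub (h.X_meas k i))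
  have hsq : ∀ k, Integrable (fun ω => (f k ω * (gradient g (x k ω) i - X k ω i)) ^ 2) P :=
    fun k => by
      simp only [mul_pow]
      exact (((hf k).pow 2).mono (ℱ.le k)).integrable_mul (hN k).integrable_sq
  refine ae_cauchySeq_sum_of_summable_integral_sq hmeas
    (fun k => (memLp_two_iff_integrable_sq ((hmeas k).mono (ℱ.le _)).aestronglyMeasurable).2
      (hsq k)) (fun k => ?_) ?_
  · have hi := (hN k).integrable one_le_two
    have h1 := condExp_mul_of_stronglyMeasurable_left (hf k).1
      (((hf k).mono (ℱ.le k)).integrable_mul hi) hi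
    have h2 : P[fun ω => gradient g (x k ω) i - X k ω i | ℱ k] =ᵐ[P] 0 := by
      refine (condExp_sub ((hh k).mono (ℱ.le k)).integrable (h.X_int k i) _).trans ?_
      rw [condExp_of_stronglyMeasurable (ℱ.le k) (hh k).1 ((hh k).mono (ℱ.le k)).integrable]
      filter_upwards [h.unbiased k i] with ω hω
      rw [Pi.sub_apply, hω, sub_self, Pi.zero_apply]
    refine h1.trans ?_
    filter_upwards [h2] with ω hω
    rw [Pi.mul_apply, hω, Pi.zero_apply, mul_zero]
  · refine (hs.mul_left 2).of_nonneg_of_le (fun k => integral_nonneg fun ω => sq_nonneg _)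
      fun k => ?_
    have e : ∫ ω, (f k ω * (gradient g (x k ω) i - X k ω i)) ^ 2 ∂P ≤
        ∫ ω, (2 * (f k ω ^ 2 * gradient g (x k ω) i ^ 2)
          + 2 * (f k ω ^ 2 * X k ω i ^ 2)) ∂P := by
      refine integral_mono (hsq k) ?_ fun ω => ?_
      · exact (((((hf k).pow 2).mul ((hh k).pow 2)).mono (ℱ.le k)).integrable.const_mul 2).add
          (((((hf k).pow 2).mono (ℱ.le k)).integrable_mul (h.X_sq_int k i)).const_mul 2)
      · nlinarith [sq_nonneg (f k ω * (gradient g (x k ω) i + X k ω i))]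
    refine e.trans ?_
    have i1 := ((((hf k).pow 2).mul ((hh k).pow 2)).mono (ℱ.le k)).integrable (P := P)
    have i2 := (((hf k).pow 2).mono (ℱ.le k)).integrable_mul (h.X_sq_int k i)
    have i3 := ((((hf k).pow 2).mul (h.boundedMeasurable_moment hg k i)).mono
      (ℱ.le k)).integrable (P := P)
    have h3 := h.integral_mul_sq_le hg i ((hf k).pow 2) fun ω => sq_nonneg _
    have h4 := integral_mono (i1.add i3) (hu k) fun ω => by
      refine le_trans (le_of_eq ?_) (hfu k ω)
      simp only [Pi.add_apply]
      ring
    rw [integral_add' i1 i3] at h4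
    rw [integral_add (i1.const_mul 2) (i2.const_mul 2), integral_const_mul, integral_const_mul]
    linarith

end IsPreconditionedSGD

/-- The RMSProp preconditioner, in terms of the running sum `s` of squared stochastic gradients. -/
noncomputable def rmsPreconditioner {ι : Type*} (ε : ℝ) (k : ℕ) (s : ι → ℝ) (i : ι) : ℝ :=
  1 / (√(s i) + ε * √(k + 1))

open Classical in
/-- The indicator that the gradient is at least `ν` while the objective and the averaged squared
stochastic gradients are at most `R`. -/
noncomputable def gate {d : ℕ} (g : EuclideanSpace ℝ (Fin d) → ℝ) (R ν : ℝ) (k : ℕ)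
    (y : EuclideanSpace ℝ (Fin d)) (s : Fin d → ℝ) : ℝ :=
  if ν ≤ ‖gradient g y‖ ∧ g y ≤ R ∧ ∀ i, s i ≤ R * (k + 1) then 1 else 0

section Preconditioner

variable {ι : Type*} {ε : ℝ} {s s' X : ι → ℝ} {i : ι}

theorem rmsPreconditioner_nonneg (hε : 0 < ε) (k : ℕ) : 0 ≤ rmsPreconditioner ε k s i := by
  unfold rmsPreconditioner
  positivity

theorem rmsPreconditioner_le (hε : 0 < ε) (k : ℕ) :
    rmsPreconditioner ε k s i ≤ 1 / (ε * √(k + 1)) := by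
  unfold rmsPreconditioner
  gcongr
  exact le_add_of_nonneg_left (Real.sqrt_nonneg _)

theorem rmsPreconditioner_succ_le (hε : 0 < ε) (k : ℕ) (h : s i ≤ s' i) :
    rmsPreconditioner ε (k + 1) s' i ≤ rmsPreconditioner ε k s i := by
  unfold rmsPreconditioner
  push_cast
  gcongr
  linarith

theorem le_rmsPreconditioner (hε : 0 < ε) {C : ℝ} (k : ℕ) (h : s i ≤ C * (k + 1)) :
    1 / √(k + 1) * (1 / (√C + ε)) ≤ rmsPreconditioner ε k s i := by
  unfold rmsPreconditioner
  rw [div_mul_div_comm, one_mul]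
  have h1 : √(s i) ≤ √C * √(k + 1) :=
    (Real.sqrt_le_sqrt h).trans (Real.sqrt_mul' _ (by positivity)).le
  gcongr
  linarith

theorem abs_rmsPreconditioner_mul_le_one (hε : 0 < ε) (k : ℕ) (hs : X i ^ 2 ≤ s i) :
    |rmsPreconditioner ε k s i * X i| ≤ 1 := by
  rw [abs_mul, abs_of_nonneg (rmsPreconditioner_nonneg hε k), rmsPreconditioner,
    one_div_mul_eq_div]
  refine div_le_one_of_le₀ ?_ (by positivity)
  have := Real.abs_le_sqrt hs
  have : 0 ≤ ε * √((k : ℝ) + 1) := by positivity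
  linarith

theorem sq_rmsPreconditioner_le (hε : 0 < ε) (k : ℕ) :
    rmsPreconditioner ε k s i ^ 2 ≤ 1 / ε ^ 2 * (1 / (k + 1)) := by
  refine (pow_le_pow_left₀ (rmsPreconditioner_nonneg hε k) (rmsPreconditioner_le hε k) 2).trans_eq
    ?_
  rw [div_pow, mul_pow, Real.sq_sqrt (by positivity), div_mul_div_comm, one_pow, one_mul]

theorem rmsPreconditioner_sub_mul_le (hε : 0 < ε) (k : ℕ) (h : s' i = s i + X i ^ 2) :
    |(rmsPreconditioner ε k s i - rmsPreconditioner ε (k + 1) s' i) * X i| ≤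
      (2 / ε ^ 2 + 1) * (1 / (k + 1) * X i ^ 2 + 1 / ((k : ℝ) + 1) ^ 2) := by
  have hs : s i ≤ s' i := by rw [h]; linarith [sq_nonneg (X i)]
  rw [abs_mul, abs_of_nonneg (sub_nonneg.2 (rmsPreconditioner_succ_le hε k hs))]
  have hr : 0 < √((k : ℝ) + 1) := by positivity
  have hr2 : √((k : ℝ) + 1) ^ 2 = k + 1 := Real.sq_sqrt (by positivity)
  set r := √((k : ℝ) + 1)
  have h1 : √(s' i) ≤ √(s i) + |X i| := by
    rw [h, ← sq_abs (X i)]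
    refine Real.sqrt_le_iff.2 ⟨by positivity, ?_⟩
    have := mul_nonneg (Real.sqrt_nonneg (s i)) (abs_nonneg (X i))
    rw [add_sq, Real.sq_sqrt']
    linarith [le_max_left (s i) 0]
  have h2 : √(((k + 1 : ℕ) : ℝ) + 1) ≤ r + 1 / r := by
    rw [Real.sqrt_le_left (by positivity), add_sq, hr2, mul_one_div, mul_div_assoc,
      div_self hr.ne']
    push_cast
    have : 0 ≤ (1 / r) ^ 2 := by positivity
    linarith
  have h3 : r ≤ √(((k + 1 : ℕ) : ℝ) + 1) := Real.sqrt_le_sqrt (by push_cast; linarith)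
  set r' := √(((k + 1 : ℕ) : ℝ) + 1)
  have h4 : rmsPreconditioner ε k s i - rmsPreconditioner ε (k + 1) s' i ≤
      (|X i| + ε * (1 / r)) / (ε * r * (ε * r)) := by
    unfold rmsPreconditioner
    rw [div_sub_div _ _ (by positivity) (by positivity)]
    have hn := mul_le_mul_of_nonneg_left h2 hε.le
    refine div_le_div₀ (by positivity) (by linarith) (by positivity) (mul_le_mul ?_ ?_
      (by positivity) (by positivity))
    · exact le_add_of_nonneg_left (Real.sqrt_nonneg _)
    · exact (mul_le_mul_of_nonneg_left h3 hε.le).trans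
        (le_add_of_nonneg_left (Real.sqrt_nonneg _))
  refine (mul_le_mul_of_nonneg_right h4 (abs_nonneg _)).trans ?_
  have e1 : (|X i| + ε * (1 / r)) / (ε * r * (ε * r)) * |X i| =
      1 / ε ^ 2 * (1 / r ^ 2 * (|X i| ^ 2 + ε / r * |X i|)) := by
    field_simp
  have e2 : ε / r * |X i| ≤ |X i| ^ 2 + ε ^ 2 * (1 / r ^ 2) := by
    have e3 : ε ^ 2 * (1 / r ^ 2) = (ε / r) ^ 2 := by rw [div_pow, mul_one_div]
    rw [e3]
    nlinarith [sq_nonneg (|X i| - ε / r), sq_nonneg (|X i| + ε / r)]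
  have e4 : 1 / ε ^ 2 * (1 / r ^ 2 * (2 * |X i| ^ 2 + ε ^ 2 * (1 / r ^ 2))) ≤
      (2 / ε ^ 2 + 1) * (1 / r ^ 2 * |X i| ^ 2 + 1 / (r ^ 2) ^ 2) := by
    have e5 : 1 / ε ^ 2 * (1 / r ^ 2 * (2 * |X i| ^ 2 + ε ^ 2 * (1 / r ^ 2))) =
        2 / ε ^ 2 * (1 / r ^ 2 * |X i| ^ 2) + 1 / (r ^ 2) ^ 2 := by
      field_simp
    rw [e5]
    have : 0 ≤ 1 / r ^ 2 * |X i| ^ 2 := by positivity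
    have : 0 ≤ 2 / ε ^ 2 * (1 / (r ^ 2) ^ 2) := by positivity
    linarith
  rw [← sq_abs (X i), ← hr2, e1]
  refine le_trans ?_ e4
  exact mul_le_mul_of_nonneg_left (mul_le_mul_of_nonneg_left (by linarith) (by positivity))
    (by positivity)

end Preconditioner

section RMSPropPath

variable {d : ℕ} {g : EuclideanSpace ℝ (Fin d) → ℝ} {L ε R ν : ℝ} {k : ℕ}
  {y : EuclideanSpace ℝ (Fin d)} {s : Fin d → ℝ}

theorem gate_eq_one (h₁ : ν ≤ ‖gradient g y‖) (h₂ : g y ≤ R) (h₃ : ∀ i, s i ≤ R * (k + 1)) :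
    gate g R ν k y s = 1 :=
  if_pos ⟨h₁, h₂, h₃⟩

theorem gate_nonneg : 0 ≤ gate g R ν k y s := by
  unfold gate
  split_ifs <;> norm_num

theorem gate_le_one : gate g R ν k y s ≤ 1 := by
  unfold gate
  split_ifs <;> norm_num

theorem cauchySeq_sum_of_coordinates {p : ℕ → EuclideanSpace ℝ (Fin d)}
    (h : ∀ i, CauchySeq fun n => ∑ k ∈ Finset.range n, p k i) :
    CauchySeq fun n => ∑ k ∈ Finset.range n, p k := by
  choose l hl using fun i => cauchySeq_tendsto_of_complete (h i)
  have h1 := ((PiLp.continuous_toLp 2 fun _ : Fin d => ℝ).tendsto l).comp (tendsto_pi_nhds.2 hl)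
  refine Tendsto.cauchySeq (x := WithLp.toLp 2 l) (h1.congr fun n => ?_)
  ext i
  simp

theorem summable_one_div_succ_sq : Summable fun k : ℕ => 1 / ((k : ℝ) + 1) ^ 2 := by
  simpa using (summable_nat_add_iff 1).2 (Real.summable_one_div_nat_pow.2 one_lt_two)

/-- RMSProp paths with bounded averaged squared gradients and convergent gated noise are
perturbed gradient descents. -/
theorem isPerturbedDescent_of_rmsprop (hg : IsSmoothObjective g L) (hε : 0 < ε)
    {x : ℕ → EuclideanSpace ℝ (Fin d)} {X S : ℕ → Fin d → ℝ} {C : ℝ}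
    (hS : ∀ k i, S (k + 1) i = S k i + X k i ^ 2)
    (hx : ∀ k i, x (k + 1) i = x k i - rmsPreconditioner ε (k + 1) (S (k + 1)) i * X k i)
    (hSb : ∀ k i, S k i ≤ C * (k + 1))
    (hN : ∀ R j : ℕ, ∀ i, CauchySeq fun n => ∑ k ∈ Finset.range n,
      gate g R (1 / (j + 1)) k (x k) (S k) * rmsPreconditioner ε k (S k) i
        * (gradient g (x k) i - X k i))
    (hN' : ∀ R j : ℕ, ∀ i, CauchySeq fun n => ∑ k ∈ Finset.range n,
      gate g R (1 / (j + 1)) k (x k) (S k) * rmsPreconditioner ε k (S k) i * gradient g (x k) i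
        * (gradient g (x k) i - X k i))
    (hX : ∀ R j : ℕ, ∀ i, Summable fun k : ℕ =>
      gate g R (1 / (j + 1)) k (x k) (S k) * (1 / (k + 1)) * X k i ^ 2) :
    IsPerturbedDescent g (fun k => 1 / √(k + 1)) x := by
  intro R₀ ν hν
  have hLpos := hg.pos
  obtain ⟨R, hR⟩ := exists_nat_ge (max R₀ C)
  have hR₀ := (le_max_left _ _).trans hR
  have hRC := (le_max_right _ _).trans hR
  obtain ⟨j, hj⟩ := exists_nat_one_div_lt hν
  set I : ℕ → ℝ := fun k => gate g R (1 / (j + 1)) k (x k) (S k) with hI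
  set A : ℕ → Fin d → ℝ := fun k => rmsPreconditioner ε k (S k) with hA
  have hSR : ∀ k i, S k i ≤ R * ((k : ℝ) + 1) := fun k i => (hSb k i).trans (by gcongr)
  have hI1 : ∀ k, g (x k) ≤ R₀ → ν ≤ ‖gradient g (x k)‖ → I k = 1 := fun k h1 h2 =>
    gate_eq_one (hj.le.trans h2) (h1.trans hR₀) (hSR k)
  set C₀ := 2 / ε ^ 2 + 1 with hC₀
  have herr : ∀ k i, |(A k i - A (k + 1) i) * X k i| ≤
      C₀ * (1 / ((k : ℝ) + 1) * X k i ^ 2 + 1 / ((k : ℝ) + 1) ^ 2) := fun k i =>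
    rmsPreconditioner_sub_mul_le hε k (hS k i)
  have hr : ∀ i, Summable fun k : ℕ =>
      I k * (1 / ((k : ℝ) + 1) * X k i ^ 2 + 1 / ((k : ℝ) + 1) ^ 2) := fun i => by
    have h1 : Summable fun k : ℕ => I k * (1 / ((k : ℝ) + 1) ^ 2) :=
      summable_one_div_succ_sq.of_nonneg_of_le
        (fun k => mul_nonneg gate_nonneg (by positivity))
        fun k => mul_le_of_le_one_left (by positivity) gate_le_one
    refine ((hX R j i).add h1).congr fun k => ?_
    simp only [hI]
    ring
  have herrs : ∀ i, Summable fun k => I k * ((A k i - A (k + 1) i) * X k i) := fun i => by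
    refine ((hr i).mul_left C₀).of_norm_bounded fun k => ?_
    rw [Real.norm_eq_abs, abs_mul, abs_of_nonneg gate_nonneg, mul_left_comm]
    exact mul_le_mul_of_nonneg_left (herr k i) gate_nonneg
  set H := √(4 * L * R₀)
  have hH0 : 0 ≤ H := Real.sqrt_nonneg _
  set C' := H * C₀ + L * (1 / ε ^ 2) with hC'
  refine ⟨fun k => WithLp.toLp 2 fun i => I k * A k i * (gradient g (x k) i - X k i)
      + I k * ((A k i - A (k + 1) i) * X k i),
    fun k => ∑ i, (I k * A k i * gradient g (x k) i * (gradient g (x k) i - X k i)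
      + C' * (I k * (1 / ((k : ℝ) + 1) * X k i ^ 2 + 1 / ((k : ℝ) + 1) ^ 2))),
    1 / (√R + ε), 1 / ε, by positivity, by positivity, ?_, ?_, fun k hgk hk => ⟨?_, ?_⟩⟩
  · refine cauchySeq_sum_of_coordinates fun i => ?_
    simp only [Finset.sum_add_distrib]
    exact (hN R j i).add (herrs i).hasSum.tendsto_sum_nat.cauchySeq
  · have h1 : ∀ i, ∃ l, Tendsto (fun n => ∑ k ∈ Finset.range n,
        (I k * A k i * gradient g (x k) i * (gradient g (x k) i - X k i)
        + C' * (I k * (1 / ((k : ℝ) + 1) * X k i ^ 2 + 1 / ((k : ℝ) + 1) ^ 2))))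
        atTop (nhds l) := fun i => by
      refine cauchySeq_tendsto_of_complete ?_
      simp only [Finset.sum_add_distrib (f := fun k => I k * A k i * _ * _)]
      exact (hN' R j i).add ((hr i).mul_left C').hasSum.tendsto_sum_nat.cauchySeq
    choose l hl using h1
    refine Tendsto.cauchySeq (x := ∑ i, l i)
      ((tendsto_finsetSum Finset.univ fun i _ => hl i).congr fun n => Finset.sum_comm)
  · have h1 := (abs_le.1 (abs_sub_sub_inner_gradient_le hg.pos.le hg.diff hg.smooth (x k)
      (x (k + 1)))).2
    rw [inner_preconditioned_step (hx k), norm_sub_sq_eq_of_preconditioned_step (hx k)] at h1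
    have h2 := norm_gradient_sq_le hg.pos hg.diff hg.nonneg hg.smooth (x k)
    have hHn : ‖gradient g (x k)‖ ≤ H :=
      Real.le_sqrt_of_sq_le (h2.trans (by gcongr))
    have h3 : ∀ i, -(gradient g (x k) i * (A (k + 1) i * X k i)) + L * (A (k + 1) i * X k i) ^ 2 ≤
        -(1 / (√R + ε) * (1 / √((k : ℝ) + 1))) * gradient g (x k) i ^ 2
        + (I k * A k i * gradient g (x k) i * (gradient g (x k) i - X k i)
        + C' * (I k * (1 / ((k : ℝ) + 1) * X k i ^ 2 + 1 / ((k : ℝ) + 1) ^ 2))) := fun i => by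
      rw [hI1 k hgk hk]
      have f1 : 1 / √((k : ℝ) + 1) * (1 / (√R + ε)) ≤ A k i := le_rmsPreconditioner hε k (hSR k i)
      have f2 := mul_le_mul_of_nonneg_right f1 (sq_nonneg (gradient g (x k) i))
      have f3 : gradient g (x k) i * ((A k i - A (k + 1) i) * X k i) ≤
          H * (C₀ * (1 / ((k : ℝ) + 1) * X k i ^ 2 + 1 / ((k : ℝ) + 1) ^ 2)) := by
        refine (le_abs_self _).trans ?_
        rw [abs_mul]
        refine mul_le_mul (le_trans ?_ hHn) (herr k i) (abs_nonneg _) hH0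
        simpa using PiLp.norm_apply_le (gradient g (x k)) i
      have f4 : (A (k + 1) i * X k i) ^ 2 ≤ 1 / ε ^ 2 * (1 / ((k : ℝ) + 1)) * X k i ^ 2 := by
        rw [mul_pow]
        refine mul_le_mul_of_nonneg_right (le_trans ?_ (sq_rmsPreconditioner_le (i := i)
          (s := S k) hε k)) (sq_nonneg _)
        exact pow_le_pow_left₀ (rmsPreconditioner_nonneg hε _)
          (rmsPreconditioner_succ_le hε k (by rw [hS]; linarith [sq_nonneg (X k i)])) 2
      have f5 := mul_le_mul_of_nonneg_left f4 hg.pos.le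
      have f6 : 0 ≤ L * (1 / ε ^ 2) * (1 / ((k : ℝ) + 1) ^ 2) := by positivity
      rw [hC']
      linarith
    have h4 := Finset.sum_le_sum fun i (_ : i ∈ Finset.univ) => h3 i
    rw [Finset.sum_add_distrib, Finset.sum_add_distrib, ← Finset.mul_sum, ← Finset.mul_sum,
      ← EuclideanSpace.real_norm_sq_eq] at h4
    linarith
  · have h1 : ‖x (k + 1) - x k - WithLp.toLp 2 fun i =>
        I k * A k i * (gradient g (x k) i - X k i)
        + I k * ((A k i - A (k + 1) i) * X k i)‖ ^ 2 ≤
        (1 / ε * (1 / √((k : ℝ) + 1) * ‖gradient g (x k)‖)) ^ 2 := by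
      rw [EuclideanSpace.real_norm_sq_eq, mul_pow, mul_pow,
        EuclideanSpace.real_norm_sq_eq (gradient g (x k)), ← mul_assoc, ← mul_pow,
        Finset.mul_sum]
      refine Finset.sum_le_sum fun i _ => ?_
      rw [hI1 k hgk hk]
      simp only [PiLp.sub_apply, hx]
      have e : x k i - A (k + 1) i * X k i - x k i - (1 * A k i * (gradient g (x k) i - X k i)
          + 1 * ((A k i - A (k + 1) i) * X k i)) = -(A k i * gradient g (x k) i) := by ring
      rw [e, neg_sq, mul_pow]
      have f1 : A k i ≤ 1 / ε * (1 / √((k : ℝ) + 1)) := by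
        rw [one_div_mul_one_div]
        exact rmsPreconditioner_le hε k
      exact mul_le_mul_of_nonneg_right
        (pow_le_pow_left₀ (rmsPreconditioner_nonneg hε k) f1 2) (sq_nonneg _)
    exact le_of_sq_le_sq h1 (by positivity)

/-- If moreover the stochastic gradients are bounded near the critical coordinates, the steps
vanish along the visits to any sublevel set. -/
theorem eventually_norm_step_le_of_rmsprop (hε : 0 < ε)
    {x : ℕ → EuclideanSpace ℝ (Fin d)} {X S : ℕ → Fin d → ℝ} {C δ₀ δ₁ : ℝ} (hδ₀ : 0 < δ₀)
    (hx : ∀ k i, x (k + 1) i = x k i - rmsPreconditioner ε (k + 1) (S (k + 1)) i * X k i)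
    (hSb : ∀ k i, S k i ≤ C * (k + 1))
    (hS : ∀ k i, S (k + 1) i = S k i + X k i ^ 2)
    (hsharp : ∀ k i, |gradient g (x k) i| ≤ δ₀ → |X k i| ≤ δ₁)
    (hX : ∀ R j : ℕ, ∀ i, Summable fun k : ℕ =>
      gate g R (1 / (j + 1)) k (x k) (S k) * (1 / (k + 1)) * X k i ^ 2)
    (R₀ : ℝ) {η : ℝ} (hη : 0 < η) :
    ∀ᶠ k in atTop, g (x k) ≤ R₀ → ‖x (k + 1) - x k‖ ≤ η := by
  obtain ⟨R, hR⟩ := exists_nat_ge (max R₀ C)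
  have hR₀ := (le_max_left _ _).trans hR
  have hRC := (le_max_right _ _).trans hR
  obtain ⟨j, hj⟩ := exists_nat_one_div_lt hδ₀
  have hlim : Tendsto (fun k : ℕ => ∑ i : Fin d, 1 / ε ^ 2 * (δ₁ ^ 2 * (1 / ((k : ℝ) + 1))
      + gate g R (1 / (j + 1)) k (x k) (S k) * (1 / (k + 1)) * X k i ^ 2)) atTop (nhds 0) := by
    rw [← Finset.sum_const_zero (ι := Fin d) (s := Finset.univ)]
    refine tendsto_finsetSum _ fun i _ => ?_
    have := ((tendsto_one_div_add_atTop_nhds_zero_nat.const_mul (δ₁ ^ 2)).add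
      (hX R j i).tendsto_atTop_zero).const_mul (1 / ε ^ 2)
    simpa using this
  filter_upwards [hlim.eventually_le_const (show 0 < η ^ 2 by positivity)] with k hk hgk
  refine le_of_sq_le_sq (le_trans ?_ hk) hη.le
  rw [norm_sub_sq_eq_of_preconditioned_step (hx k)]
  refine Finset.sum_le_sum fun i _ => ?_
  have f4 : (rmsPreconditioner ε (k + 1) (S (k + 1)) i * X k i) ^ 2 ≤
      1 / ε ^ 2 * (1 / ((k : ℝ) + 1) * X k i ^ 2) := by
    rw [mul_pow, ← mul_assoc]
    refine mul_le_mul_of_nonneg_right (le_trans ?_ (sq_rmsPreconditioner_le (i := i) (s := S k)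
      hε k)) (sq_nonneg _)
    exact pow_le_pow_left₀ (rmsPreconditioner_nonneg hε _)
      (rmsPreconditioner_succ_le hε k (by rw [hS]; linarith [sq_nonneg (X k i)])) 2
  refine f4.trans (mul_le_mul_of_nonneg_left ?_ (by positivity))
  rcases le_or_gt |gradient g (x k) i| δ₀ with h | h
  · have h1 := pow_le_pow_left₀ (abs_nonneg _) (hsharp k i h) 2
    rw [sq_abs] at h1
    rw [mul_comm]
    exact le_add_of_le_of_nonneg (mul_le_mul_of_nonneg_right h1 (by positivity))
      (mul_nonneg (mul_nonneg gate_nonneg (by positivity)) (sq_nonneg _))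
  · rw [gate_eq_one ?_ (hgk.trans hR₀) fun i => (hSb k i).trans (by gcongr), one_mul]
    · exact le_add_of_nonneg_left (by positivity)
    · exact (hj.le.trans h.le).trans (by simpa using PiLp.norm_apply_le (gradient g (x k)) i)

end RMSPropPath

theorem gate_mul_moment_le {d : ℕ} {g : EuclideanSpace ℝ (Fin d) → ℝ} {ε R ν τ₀ τ₁ : ℝ}
    (hε : 0 < ε) (hν : 0 < ν) (hτ₀ : 0 ≤ τ₀) (hτ₁ : 0 ≤ τ₁) (k : ℕ)
    (y : EuclideanSpace ℝ (Fin d)) (s : Fin d → ℝ) (i : Fin d) :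
    gate g R ν k y s * (1 / (k + 1)) * (τ₀ * gradient g y i ^ 2 + τ₁) ≤
      (τ₀ + τ₁ / ν ^ 2) * (√R + ε) *
        (1 / √(k + 1) * ∑ i, rmsPreconditioner ε k s i * gradient g y i ^ 2) := by
  by_cases hg : ν ≤ ‖gradient g y‖ ∧ g y ≤ R ∧ ∀ i, s i ≤ R * (k + 1)
  · rw [gate_eq_one hg.1 hg.2.1 hg.2.2, one_mul]
    have h1 : 1 / √((k : ℝ) + 1) * (1 / (√R + ε)) * ‖gradient g y‖ ^ 2 ≤
        ∑ i, rmsPreconditioner ε k s i * gradient g y i ^ 2 := by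
      rw [EuclideanSpace.real_norm_sq_eq, Finset.mul_sum]
      exact Finset.sum_le_sum fun i _ =>
        mul_le_mul_of_nonneg_right (le_rmsPreconditioner hε k (hg.2.2 i)) (sq_nonneg _)
    have h2 : τ₀ * gradient g y i ^ 2 + τ₁ ≤ (τ₀ + τ₁ / ν ^ 2) * ‖gradient g y‖ ^ 2 := by
      have h3 : gradient g y i ^ 2 ≤ ‖gradient g y‖ ^ 2 := by
        rw [← sq_abs]
        exact pow_le_pow_left₀ (abs_nonneg _)
          (by simpa using PiLp.norm_apply_le (gradient g y) i) 2
      have h4 : τ₁ ≤ τ₁ / ν ^ 2 * ‖gradient g y‖ ^ 2 := by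
        rw [div_mul_eq_mul_div, le_div_iff₀ (by positivity)]
        exact mul_le_mul_of_nonneg_left (pow_le_pow_left₀ hν.le hg.1 2) hτ₁
      rw [add_mul]
      exact add_le_add (mul_le_mul_of_nonneg_left h3 hτ₀) h4
    calc 1 / ((k : ℝ) + 1) * (τ₀ * gradient g y i ^ 2 + τ₁)
        ≤ 1 / ((k : ℝ) + 1) * ((τ₀ + τ₁ / ν ^ 2) * ‖gradient g y‖ ^ 2) := by gcongr
      _ = (τ₀ + τ₁ / ν ^ 2) * (√R + ε) *
          (1 / √(k + 1) * (1 / √(k + 1) * (1 / (√R + ε)) * ‖gradient g y‖ ^ 2)) := by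
        rw [show 1 / ((k : ℝ) + 1) = 1 / √(k + 1) * (1 / √(k + 1)) by
          rw [div_mul_div_comm, Real.mul_self_sqrt (by positivity), one_mul]]
        have : √R + ε ≠ 0 := by positivity
        field_simp
      _ ≤ _ := by gcongr
  · have h0 : gate g R ν k y s = 0 := if_neg hg
    rw [h0, zero_mul, zero_mul]
    have : 0 ≤ ∑ i, rmsPreconditioner ε k s i * gradient g y i ^ 2 :=
      Finset.sum_nonneg fun i _ => mul_nonneg (rmsPreconditioner_nonneg hε k) (sq_nonneg _)
    positivity

theorem gate_sq {d : ℕ} {g : EuclideanSpace ℝ (Fin d) → ℝ} {R ν : ℝ} {k : ℕ}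
    {y : EuclideanSpace ℝ (Fin d)} {s : Fin d → ℝ} : gate g R ν k y s ^ 2 = gate g R ν k y s := by
  unfold gate
  split_ifs <;> norm_num

/-- If the large increments are summable relative to the preconditioner, then the averaged squared
stochastic gradients are bounded. -/
theorem exists_forall_le_mul_succ {s X h : ℕ → ℝ} {ε δ₀ δ₁ : ℝ} (hε : 0 < ε) (hs0 : ∀ k, 0 ≤ s k)
    (hs : ∀ k, s (k + 1) = s k + X k ^ 2) (hsharp : ∀ k, |h k| ≤ δ₀ → |X k| ≤ δ₁) {ξ : ℕ → ℝ}
    (hξ0 : ∀ k, 0 ≤ ξ k) (hξ : Summable ξ)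
    (hX : ∀ k, δ₀ < |h k| → X k ^ 2 ≤ ξ k * (√(k + 1) * (√(s k) + ε * √(k + 1)))) :
    ∃ C, ∀ k, s k ≤ C * (k + 1) := by
  set B := max (s 0) (δ₁ ^ 2) + 1 + ε with hB
  have hB1 : s 0 + 1 + ε ≤ B := by linarith [le_max_left (s 0) (δ₁ ^ 2)]
  have hB2 : δ₁ ^ 2 + 1 + ε ≤ B := by linarith [le_max_right (s 0) (δ₁ ^ 2)]
  have hB0 : 0 ≤ B := (by positivity : 0 ≤ δ₁ ^ 2 + 1 + ε).trans hB2
  have key : ∀ n : ℕ, s n + (1 + ε) * (n + 1) ≤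
      B * Real.exp (∑ k ∈ Finset.range n, ξ k) * (n + 1) := fun n => by
    induction n with
    | zero => simpa [add_assoc] using hB1
    | succ n ih =>
      have hE0 : B ≤ B * Real.exp (∑ k ∈ Finset.range n, ξ k) :=
        le_mul_of_one_le_right hB0 (Real.one_le_exp (Finset.sum_nonneg fun k _ => hξ0 k))
      have hE1 : B * Real.exp (∑ k ∈ Finset.range n, ξ k) * (1 + ξ n) ≤
          B * Real.exp (∑ k ∈ Finset.range (n + 1), ξ k) := by
        rw [Finset.sum_range_succ, Real.exp_add, ← mul_assoc]
        exact mul_le_mul_of_nonneg_left (by linarith [Real.add_one_le_exp (ξ n)]) (by positivity)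
      set E := B * Real.exp (∑ k ∈ Finset.range n, ξ k)
      have hE : 0 ≤ E := hB0.trans hE0
      have hEξ := mul_nonneg hE (hξ0 n)
      have hn : (0 : ℝ) ≤ n + 1 := by positivity
      rw [hs]
      push_cast
      have h1 : X n ^ 2 ≤ δ₁ ^ 2 + ξ n * (E * (n + 1)) := by
        rcases le_or_gt |h n| δ₀ with hh | hh
        · have h2 := pow_le_pow_left₀ (abs_nonneg _) (hsharp n hh) 2
          rw [sq_abs] at h2
          exact h2.trans (le_add_of_nonneg_right (mul_nonneg (hξ0 n) (by positivity)))
        · refine (hX n hh).trans (le_trans ?_ (le_add_of_nonneg_left (sq_nonneg _)))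
          refine mul_le_mul_of_nonneg_left (le_trans ?_ ih) (hξ0 n)
          nlinarith [Real.sq_sqrt hn, Real.sq_sqrt (hs0 n), sq_nonneg (√((n : ℝ) + 1) - √(s n)),
            sq_nonneg (√((n : ℝ) + 1) + √(s n))]
      have h3 := mul_le_mul_of_nonneg_right hE1 (by positivity : (0 : ℝ) ≤ n + 1 + 1)
      nlinarith
  refine ⟨B * Real.exp (∑' k, ξ k), fun k => ?_⟩
  have h1 : s k ≤ s k + (1 + ε) * (k + 1) := le_add_of_nonneg_right (by positivity)
  refine (h1.trans (key k)).trans ?_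
  gcongr
  exact hξ.sum_le_tsum _ fun k _ => hξ0 k

namespace IsPreconditionedSGD

variable {d : ℕ} {Ω : Type*} {m0 : MeasurableSpace Ω} {P : Measure Ω}
  {ℱ : Filtration ℕ m0} {g : EuclideanSpace ℝ (Fin d) → ℝ} {L σ₀ σ₁ ε : ℝ}
  {x : ℕ → Ω → EuclideanSpace ℝ (Fin d)} {X S : ℕ → Ω → Fin d → ℝ}

theorem boundedMeasurable_gate
    (h : IsPreconditionedSGD P ℱ g σ₀ σ₁ ε x X fun k ω => rmsPreconditioner ε k (S k ω))
    (hg : Continuous g) (hg' : Continuous (gradient g))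
    (hS : ∀ k i, StronglyMeasurable[ℱ k] fun ω => S k ω i) (R ν : ℝ) (k : ℕ) :
    BoundedMeasurable (ℱ k) fun ω => gate g R ν k (x k ω) (S k ω) := by
  classical
  have hm : MeasurableSet[ℱ k] {ω | ν ≤ ‖gradient g (x k ω)‖ ∧ g (x k ω) ≤ R ∧
      ∀ i, S k ω i ≤ R * (k + 1)} := by
    have h1 := (h.comp_x k hg'.norm).1.measurable
    have h2 := (h.comp_x k hg).1.measurable
    have h3 : MeasurableSet[ℱ k] {ω | ∀ i, S k ω i ≤ R * (k + 1)} := by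
      rw [Set.ofPred_forall]
      exact MeasurableSet.iInter fun i => measurableSet_le (hS k i).measurable measurable_const
    exact (measurableSet_le measurable_const h1).inter
      ((measurableSet_le h2 measurable_const).inter h3)
  convert (BoundedMeasurable.const 1).indicator hm using 1
  ext ω
  simp only [gate, Set.indicator_apply, Set.mem_ofPred_eq]

variable [IsProbabilityMeasure P]

theorem integrable_energy {A : ℕ → Ω → Fin d → ℝ} (h : IsPreconditionedSGD P ℱ g σ₀ σ₁ ε x X A)
    (hg : Continuous (gradient g)) (C : ℝ) (k : ℕ) :
    Integrable (fun ω =>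
      C * (1 / √((k : ℝ) + 1) * ∑ i, A k ω i * gradient g (x k ω) i ^ 2)) P :=
  ((((h.boundedMeasurable_energy hg k).mono (ℱ.le k)).integrable).const_mul _).const_mul _

theorem summable_integral_const_mul_energy {A : ℕ → Ω → Fin d → ℝ}
    (h : IsPreconditionedSGD P ℱ g σ₀ σ₁ ε x X A)
    (hg : IsSmoothObjective g L) (hσ₀ : 0 ≤ σ₀) (hσ₁ : 0 < σ₁) (hε : 0 < ε) (C : ℝ) :
    Summable fun k : ℕ =>
      ∫ ω, C * (1 / √((k : ℝ) + 1) * ∑ i, A k ω i * gradient g (x k ω) i ^ 2) ∂P := by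
  simp only [integral_const_mul]
  exact (h.summable_integral_energy hg hσ₀ hσ₁ hε).mul_left C

theorem ae_summable_energy {A : ℕ → Ω → Fin d → ℝ}
    (h : IsPreconditionedSGD P ℱ g σ₀ σ₁ ε x X A)
    (hg : IsSmoothObjective g L) (hσ₀ : 0 ≤ σ₀) (hσ₁ : 0 < σ₁) (hε : 0 < ε) :
    ∀ᵐ ω ∂P, Summable fun k : ℕ =>
      1 / √((k : ℝ) + 1) * ∑ i, A k ω i * gradient g (x k ω) i ^ 2 := by
  have h1 := ae_summable_of_summable_integral (h.integrable_energy hg.continuous_gradient 1)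
    (fun k ω => by have := h.energy_nonneg k ω; positivity)
    (h.summable_integral_const_mul_energy hg hσ₀ hσ₁ hε 1)
  simpa only [one_mul] using h1

theorem ae_exists_forall_le_mul_succ
    (h : IsPreconditionedSGD P ℱ g σ₀ σ₁ ε x X fun k ω => rmsPreconditioner ε k (S k ω))
    (hg : IsSmoothObjective g L) (hσ₀ : 0 ≤ σ₀) (hσ₁ : 0 < σ₁) (hε : 0 < ε)
    (hS0 : ∀ k ω i, 0 ≤ S k ω i)
    (hS : ∀ k ω i, S (k + 1) ω i = S k ω i + X k ω i ^ 2) {δ₀ δ₁ : ℝ} (hδ₀ : 0 < δ₀)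
    (hsharp : ∀ᵐ ω ∂P, ∀ k i, |gradient g (x k ω) i| ≤ δ₀ → |X k ω i| ≤ δ₁) (i : Fin d) :
    ∀ᵐ ω ∂P, ∃ C, ∀ k : ℕ, S k ω i ≤ C * (k + 1) := by
  have hgc := hg.continuous_gradient
  set T : ℕ → Set Ω := fun k => {ω | δ₀ < |gradient g (x k ω) i|} with hT
  have hTm : ∀ k, MeasurableSet[ℱ k] (T k) := fun k =>
    measurableSet_lt measurable_const
      (h.comp_x k (φ := fun y => |gradient g y i|) (by fun_prop)).1.measurable
  set f : ℕ → Ω → ℝ := fun k => (T k).indicator fun ω =>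
    1 / √((k : ℝ) + 1) * rmsPreconditioner ε k (S k ω) i with hf
  have hf0 : ∀ k ω, 0 ≤ f k ω := fun k ω => Set.indicator_nonneg
    (fun ω _ => mul_nonneg (by positivity) (rmsPreconditioner_nonneg hε k)) ω
  have hsum := h.ae_summable_mul_sq hgc i (f := f)
    (fun k => ((BoundedMeasurable.const _).mul (h.boundedMeasurable_A k i)).indicator (hTm k)) hf0
    (h.integrable_energy hgc (σ₀ + σ₁ / δ₀ ^ 2))
    (fun k ω => ?_) (h.summable_integral_const_mul_energy hg hσ₀ hσ₁ hε _)
  · filter_upwards [hsum, hsharp] with ω h1 h2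
    refine exists_forall_le_mul_succ hε (fun k => hS0 k ω i) (fun k => hS k ω i)
      (fun k => h2 k i) (fun k => mul_nonneg (hf0 k ω) (sq_nonneg _)) h1 fun k hk => ?_
    have hk' : ω ∈ T k := hk
    have h3 : 0 < √((k : ℝ) + 1) := by positivity
    simp only [hf, Set.indicator_of_mem hk', rmsPreconditioner]
    field_simp
    rfl
  · have he := h.energy_nonneg k ω
    by_cases hω : ω ∈ T k
    · have hω' : δ₀ < |gradient g (x k ω) i| := hω
      simp only [hf, Set.indicator_of_mem hω]
      have h1 : σ₁ ≤ σ₁ / δ₀ ^ 2 * gradient g (x k ω) i ^ 2 := by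
        rw [div_mul_eq_mul_div, le_div_iff₀ (by positivity), ← sq_abs (gradient g (x k ω) i)]
        exact mul_le_mul_of_nonneg_left (pow_le_pow_left₀ hδ₀.le hω'.le 2) hσ₁.le
      have h2 : rmsPreconditioner ε k (S k ω) i * gradient g (x k ω) i ^ 2 ≤
          ∑ i, rmsPreconditioner ε k (S k ω) i * gradient g (x k ω) i ^ 2 :=
        Finset.single_le_sum (f := fun i =>
          rmsPreconditioner ε k (S k ω) i * gradient g (x k ω) i ^ 2)
          (fun i _ => mul_nonneg (rmsPreconditioner_nonneg hε k) (sq_nonneg _))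
          (Finset.mem_univ i)
      have h3 := rmsPreconditioner_nonneg (s := S k ω) (i := i) hε k
      calc 1 / √((k : ℝ) + 1) * rmsPreconditioner ε k (S k ω) i
            * (σ₀ * gradient g (x k ω) i ^ 2 + σ₁)
          ≤ 1 / √((k : ℝ) + 1) * rmsPreconditioner ε k (S k ω) i
            * (σ₀ * gradient g (x k ω) i ^ 2 + σ₁ / δ₀ ^ 2 * gradient g (x k ω) i ^ 2) := by
            gcongr
        _ = (σ₀ + σ₁ / δ₀ ^ 2) * (1 / √((k : ℝ) + 1) *
            (rmsPreconditioner ε k (S k ω) i * gradient g (x k ω) i ^ 2)) := by ring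
        _ ≤ _ := by gcongr
    · simp only [hf, Set.indicator_of_notMem hω, zero_mul]
      positivity

theorem ae_summable_gate_mul_sq
    (h : IsPreconditionedSGD P ℱ g σ₀ σ₁ ε x X fun k ω => rmsPreconditioner ε k (S k ω))
    (hg : IsSmoothObjective g L) (hσ₀ : 0 ≤ σ₀) (hσ₁ : 0 < σ₁) (hε : 0 < ε)
    (hSm : ∀ k i, StronglyMeasurable[ℱ k] fun ω => S k ω i) (R : ℝ) {ν : ℝ} (hν : 0 < ν)
    (i : Fin d) :
    ∀ᵐ ω ∂P, Summable fun k : ℕ =>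
      gate g R ν k (x k ω) (S k ω) * (1 / (k + 1)) * X k ω i ^ 2 :=
  h.ae_summable_mul_sq hg.continuous_gradient i
    (fun k => (h.boundedMeasurable_gate hg.diff.continuous hg.continuous_gradient hSm R ν k).mul
      (BoundedMeasurable.const _))
    (fun k ω => mul_nonneg gate_nonneg (by positivity))
    (h.integrable_energy hg.continuous_gradient _)
    (fun k ω => gate_mul_moment_le hε hν hσ₀ hσ₁.le k (x k ω) (S k ω) i)
    (h.summable_integral_const_mul_energy hg hσ₀ hσ₁ hε _)

theorem ae_cauchySeq_gate_noise
    (h : IsPreconditionedSGD P ℱ g σ₀ σ₁ ε x X fun k ω => rmsPreconditioner ε k (S k ω))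
    (hg : IsSmoothObjective g L) (hσ₀ : 0 ≤ σ₀) (hσ₁ : 0 < σ₁) (hε : 0 < ε)
    (hSm : ∀ k i, StronglyMeasurable[ℱ k] fun ω => S k ω i) (R : ℝ) {ν : ℝ} (hν : 0 < ν)
    (i : Fin d) {p : ℕ → Ω → ℝ} (hp : ∀ k, BoundedMeasurable (ℱ k) (p k)) {H : ℝ}
    (hH : 0 ≤ H) (hpH : ∀ k ω, g (x k ω) ≤ R → p k ω ^ 2 ≤ H) :
    ∀ᵐ ω ∂P, CauchySeq fun n => ∑ k ∈ Finset.range n,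
      gate g R ν k (x k ω) (S k ω) * rmsPreconditioner ε k (S k ω) i * p k ω
        * (gradient g (x k ω) i - X k ω i) := by
  refine h.ae_cauchySeq_noise hg.continuous_gradient i
    (fun k => ((h.boundedMeasurable_gate hg.diff.continuous hg.continuous_gradient hSm R ν k).mul
      (h.boundedMeasurable_A k i)).mul (hp k))
    (h.integrable_energy hg.continuous_gradient
      (H / ε ^ 2 * ((σ₀ + 1 + σ₁ / ν ^ 2) * (√R + ε)))) (fun k ω => ?_)
    (h.summable_integral_const_mul_energy hg hσ₀ hσ₁ hε _)
  have hm : 0 ≤ (σ₀ + 1) * gradient g (x k ω) i ^ 2 + σ₁ := by positivity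
  have h1 := gate_mul_moment_le (g := g) (R := R) hε hν (by positivity : 0 ≤ σ₀ + 1) hσ₁.le k
    (x k ω) (S k ω) i
  have h2 : (gate g R ν k (x k ω) (S k ω) * rmsPreconditioner ε k (S k ω) i * p k ω) ^ 2 ≤
      H / ε ^ 2 * (gate g R ν k (x k ω) (S k ω) * (1 / (k + 1))) := by
    rw [mul_pow, mul_pow, gate_sq]
    by_cases hR : g (x k ω) ≤ R
    · have h3 := mul_le_mul (sq_rmsPreconditioner_le (s := S k ω) (i := i) hε k) (hpH k ω hR)
        (sq_nonneg _) (by positivity)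
      rw [mul_assoc]
      refine (mul_le_mul_of_nonneg_left h3 gate_nonneg).trans_eq ?_
      ring
    · have h0 : gate g R ν k (x k ω) (S k ω) = 0 := if_neg fun h => hR h.2.1
      rw [h0]
      simp
  calc _ ≤ H / ε ^ 2 * (gate g R ν k (x k ω) (S k ω) * (1 / (k + 1)))
        * ((σ₀ + 1) * gradient g (x k ω) i ^ 2 + σ₁) := mul_le_mul_of_nonneg_right h2 hm
    _ = H / ε ^ 2 * (gate g R ν k (x k ω) (S k ω) * (1 / (k + 1))
        * ((σ₀ + 1) * gradient g (x k ω) i ^ 2 + σ₁)) := by ring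
    _ ≤ _ := by
      rw [mul_assoc (H / ε ^ 2)]
      exact mul_le_mul_of_nonneg_left h1 (by positivity)

end IsPreconditionedSGD

/-- Almost sure convergence to zero together with bounded second moments implies convergence of
the means. -/
theorem tendsto_integral_of_ae_tendsto_of_integral_sq_le {Ω : Type*} {m0 : MeasurableSpace Ω}
    {P : Measure Ω} [IsProbabilityMeasure P] {y : ℕ → Ω → ℝ} (hy : ∀ k, MemLp (y k) 2 P)
    (hy0 : ∀ k ω, 0 ≤ y k ω) (hlim : ∀ᵐ ω ∂P, Tendsto (fun k => y k ω) atTop (nhds 0)) {C : ℝ}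
    (hC : ∀ᶠ k in atTop, ∫ ω, y k ω ^ 2 ∂P ≤ C) :
    Tendsto (fun k => ∫ ω, y k ω ∂P) atTop (nhds 0) := by
  have hmin : ∀ M : ℝ, 0 ≤ M →
      Tendsto (fun k => ∫ ω, min (y k ω) M ∂P) atTop (nhds 0) := fun M hM => by
    have h1 := tendsto_integral_of_dominated_convergence (μ := P) (f := fun _ => (0 : ℝ))
      (F := fun k ω => min (y k ω) M) (fun _ => M)
      (fun k => (hy k).1.inf aestronglyMeasurable_const) (integrable_const M)
      (fun k => Eventually.of_forall fun ω => by
        rw [Real.norm_eq_abs, abs_of_nonneg (le_min (hy0 k ω) hM)]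
        exact min_le_right _ _)
      (by
        filter_upwards [hlim] with ω hω
        simpa [hM] using hω.min (tendsto_const_nhds (x := M)))
    simpa using h1
  refine (tendsto_order.2 ⟨fun a ha => Eventually.of_forall fun k =>
    ha.trans_le (integral_nonneg (hy0 k)), fun η hη => ?_⟩)
  set M := 2 * (|C| + 1) / η with hM
  have hM0 : 0 < M := by positivity
  filter_upwards [hC, (hmin M hM0.le).eventually_lt_const (half_pos hη)] with k h1 h2
  have hi := (hy k).integrable one_le_two
  have hmi : Integrable (fun ω => min (y k ω) M) P := hi.inf (integrable_const M)
  have h3 : ∫ ω, y k ω ∂P ≤ ∫ ω, (min (y k ω) M + 1 / M * y k ω ^ 2) ∂P := by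
    refine integral_mono hi (hmi.add
      ((hy k).integrable_sq.const_mul _)) fun ω => ?_
    rcases le_total (y k ω) M with h | h
    · simp only [min_eq_left h]
      exact le_add_of_nonneg_right (by positivity)
    · refine le_add_of_nonneg_of_le (le_min (hy0 k ω) hM0.le) ?_
      rw [one_div_mul_eq_div, le_div_iff₀ hM0, pow_two]
      exact mul_le_mul_of_nonneg_left h (hy0 k ω)
  rw [integral_add hmi ((hy k).integrable_sq.const_mul _), integral_const_mul] at h3
  have h4 : 1 / M * ∫ ω, y k ω ^ 2 ∂P < η / 2 := by
    rw [one_div_mul_eq_div, div_lt_iff₀ hM0, hM]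
    have : η / 2 * (2 * (|C| + 1) / η) = |C| + 1 := by field_simp
    rw [this]
    linarith [le_abs_self C]
  have h5 : ∫ ω, min (y k ω) M ∂P < η / 2 := h2
  linarith

theorem not_summable_one_div_succ : ¬ Summable fun k : ℕ => 1 / ((k : ℝ) + 1) := fun h =>
  Real.not_summable_one_div_natCast ((summable_nat_add_iff 1).1 (by simpa using h))

theorem not_summable_one_div_sqrt_succ : ¬ Summable fun k : ℕ => 1 / √((k : ℝ) + 1) := fun h =>
  not_summable_one_div_succ (h.of_nonneg_of_le (fun k => by positivity) fun k => by
    have h1 : (1 : ℝ) ≤ k + 1 := by linarith [k.cast_nonneg (α := ℝ)]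
    gcongr
    exact Real.sqrt_le_iff.2 ⟨by positivity, by nlinarith⟩)

/-- Summability of the energy prevents the gradient from staying bounded away from zero. -/
theorem frequently_le_of_summable_energy {d : ℕ} {g : EuclideanSpace ℝ (Fin d) → ℝ} {ε C δ K : ℝ}
    (hε : 0 < ε) (hδ : 0 < δ) (i : Fin d) (hK : ∀ y, K ≤ g y → δ < |gradient g y i|)
    {x : ℕ → EuclideanSpace ℝ (Fin d)} {S : ℕ → Fin d → ℝ} (hS : ∀ k i, S k i ≤ C * (k + 1))
    (hs : Summable fun k : ℕ =>
      1 / √((k : ℝ) + 1) * ∑ i, rmsPreconditioner ε k (S k) i * gradient g (x k) i ^ 2) :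
    ∃ᶠ k in atTop, g (x k) ≤ K := by
  intro hev
  have hc : 0 < 1 / (√C + ε) * δ ^ 2 := by positivity
  refine not_summable_one_div_succ ((summable_mul_left_iff hc.ne').1
    (hs.of_norm_bounded_eventually_nat ?_))
  filter_upwards [hev] with k hk
  have h1 := hK _ (not_le.1 hk).le
  have h2 : δ ^ 2 ≤ gradient g (x k) i ^ 2 := by
    rw [← sq_abs (gradient g (x k) i)]
    exact pow_le_pow_left₀ hδ.le h1.le 2
  have h3 : rmsPreconditioner ε k (S k) i * gradient g (x k) i ^ 2 ≤
      ∑ i, rmsPreconditioner ε k (S k) i * gradient g (x k) i ^ 2 :=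
    Finset.single_le_sum (f := fun i => rmsPreconditioner ε k (S k) i * gradient g (x k) i ^ 2)
      (fun i _ => mul_nonneg (rmsPreconditioner_nonneg hε k) (sq_nonneg _)) (Finset.mem_univ i)
  rw [Real.norm_of_nonneg (by positivity)]
  calc 1 / (√C + ε) * δ ^ 2 * (1 / ((k : ℝ) + 1))
      = 1 / √((k : ℝ) + 1) * (1 / √((k : ℝ) + 1) * (1 / (√C + ε)) * δ ^ 2) := by
        rw [show 1 / ((k : ℝ) + 1) = 1 / √(k + 1) * (1 / √(k + 1)) by
          rw [div_mul_div_comm, Real.mul_self_sqrt (by positivity), one_mul]]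
        ring
    _ ≤ 1 / √((k : ℝ) + 1) * (rmsPreconditioner ε k (S k) i * gradient g (x k) i ^ 2) := by
        gcongr
        · exact rmsPreconditioner_nonneg hε k
        · exact le_rmsPreconditioner hε k (hS k i)
    _ ≤ _ := by gcongr

namespace IsPreconditionedSGD

variable {d : ℕ} {Ω : Type*} {m0 : MeasurableSpace Ω} {P : Measure Ω} [IsProbabilityMeasure P]
  {ℱ : Filtration ℕ m0} {g : EuclideanSpace ℝ (Fin d) → ℝ} {L σ₀ σ₁ ε δ δ₀ δ₁ : ℝ}
  {x : ℕ → Ω → EuclideanSpace ℝ (Fin d)} {X S : ℕ → Ω → Fin d → ℝ}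

theorem ae_tendsto_gradient
    (h : IsPreconditionedSGD P ℱ g σ₀ σ₁ ε x X fun k ω => rmsPreconditioner ε k (S k ω))
    (hg : IsSmoothObjective g L) (hσ₀ : 0 ≤ σ₀) (hσ₁ : 0 < σ₁) (hε : 0 < ε)
    (hSm : ∀ k i, StronglyMeasurable[ℱ k] fun ω => S k ω i) (hS0 : ∀ k ω i, 0 ≤ S k ω i)
    (hS : ∀ k ω i, S (k + 1) ω i = S k ω i + X k ω i ^ 2) (hδ₀ : 0 < δ₀)
    (hsharp : ∀ᵐ ω ∂P, ∀ k i, |gradient g (x k ω) i| ≤ δ₀ → |X k ω i| ≤ δ₁)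
    (hd : 0 < d) (hδ : 0 < δ)
    (hflat : ∀ i, ∀ᶠ y in Bornology.cobounded (EuclideanSpace ℝ (Fin d)), δ < |gradient g y i|)
    (hc : Tendsto g (Bornology.cobounded (EuclideanSpace ℝ (Fin d))) atTop)
    (hsard : interior (closure {y : ℝ | ∃ x, gradient g x = 0 ∧ g x = y}) = ∅) :
    ∀ᵐ ω ∂P, Tendsto (fun k => gradient g (x k ω)) atTop (nhds 0) := by
  obtain ⟨K, -, hK⟩ := exists_forall_le_imp_of_cobounded hg.diff.continuous hflat
  have hgc := hg.continuous_gradient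
  have hν : ∀ j : ℕ, 0 < 1 / ((j : ℝ) + 1) := fun j => by positivity
  have hN : ∀ᵐ ω ∂P, ∀ R j : ℕ, ∀ i, CauchySeq fun n => ∑ k ∈ Finset.range n,
      gate g R (1 / (j + 1)) k (x k ω) (S k ω) * rmsPreconditioner ε k (S k ω) i
        * (gradient g (x k ω) i - X k ω i) := by
    simp only [ae_all_iff]
    intro R j i
    simpa only [mul_one] using h.ae_cauchySeq_gate_noise hg hσ₀ hσ₁ hε hSm R (hν j) i
      (fun _ => BoundedMeasurable.const 1) zero_le_one fun _ _ _ => (one_pow 2).le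
  have hN' : ∀ᵐ ω ∂P, ∀ R j : ℕ, ∀ i, CauchySeq fun n => ∑ k ∈ Finset.range n,
      gate g R (1 / (j + 1)) k (x k ω) (S k ω) * rmsPreconditioner ε k (S k ω) i
        * gradient g (x k ω) i * (gradient g (x k ω) i - X k ω i) := by
    simp only [ae_all_iff]
    intro R j i
    have hLpos := hg.pos
    refine h.ae_cauchySeq_gate_noise hg hσ₀ hσ₁ hε hSm R (hν j) i
      (fun k => h.boundedMeasurable_gradient hgc k i) (H := 4 * L * R) (by positivity)
      fun k ω hR => ?_
    have h1 := norm_gradient_sq_le hg.pos hg.diff hg.nonneg hg.smooth (x k ω)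
    rw [← sq_abs]
    refine (pow_le_pow_left₀ (abs_nonneg _)
      (by simpa using PiLp.norm_apply_le (gradient g (x k ω)) i) 2).trans (h1.trans ?_)
    gcongr
  have hX : ∀ᵐ ω ∂P, ∀ R j : ℕ, ∀ i, Summable fun k : ℕ =>
      gate g R (1 / (j + 1)) k (x k ω) (S k ω) * (1 / (k + 1)) * X k ω i ^ 2 := by
    simp only [ae_all_iff]
    exact fun R j i => h.ae_summable_gate_mul_sq hg hσ₀ hσ₁ hε hSm R (hν j) i
  filter_upwards [hN, hN', hX, hsharp, h.ae_summable_energy hg hσ₀ hσ₁ hε,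
    ae_all_iff.2 fun i => h.ae_exists_forall_le_mul_succ hg hσ₀ hσ₁ hε hS0 hS hδ₀ hsharp i]
    with ω hN hN' hX hsharp hsum hC
  choose C hC using hC
  have hSb : ∀ k i, S k ω i ≤ (∑ i, |C i|) * ((k : ℝ) + 1) := fun k i => by
    refine (hC i k).trans (mul_le_mul_of_nonneg_right ((le_abs_self _).trans ?_) (by positivity))
    exact Finset.single_le_sum (f := fun i => |C i|) (fun i _ => abs_nonneg _) (Finset.mem_univ i)
  have hpd := isPerturbedDescent_of_rmsprop hg hε (x := fun k => x k ω) (X := fun k => X k ω)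
    (S := fun k => S k ω) (fun k i => hS k ω i) (fun k i => h.x_succ k ω i) hSb hN hN' hX
  have hstep := eventually_norm_step_le_of_rmsprop hε hδ₀ (x := fun k => x k ω)
    (fun k i => h.x_succ k ω i) hSb (fun k i => hS k ω i) hsharp hX
  obtain ⟨ℓ, hℓ⟩ := hpd.exists_tendsto (fun k => by positivity) hg.pos hg.diff hg.nonneg hg.smooth
    hc (fun R η hη => hstep R hη) hsard
    (frequently_le_of_summable_energy hε hδ ⟨0, hd⟩ (fun y hy => hK y hy _) hSb hsum)
  exact hpd.tendsto_gradient (fun k => by positivity) not_summable_one_div_sqrt_succ hg.pos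
    hg.nonneg hg.smooth hℓ

theorem tendsto_integral_norm_gradient_sq
    (h : IsPreconditionedSGD P ℱ g σ₀ σ₁ ε x X fun k ω => rmsPreconditioner ε k (S k ω))
    (hg : IsSmoothObjective g L) (hσ₀ : 0 ≤ σ₀) (hσ₁ : 0 < σ₁) (hε : 0 < ε)
    (hSm : ∀ k i, StronglyMeasurable[ℱ k] fun ω => S k ω i) (hS0 : ∀ k ω i, 0 ≤ S k ω i)
    (hS : ∀ k ω i, S (k + 1) ω i = S k ω i + X k ω i ^ 2) (hδ₀ : 0 < δ₀)
    (hsharp : ∀ᵐ ω ∂P, ∀ k i, |gradient g (x k ω) i| ≤ δ₀ → |X k ω i| ≤ δ₁)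
    (hd : 0 < d) (hδ : 0 < δ)
    (hflat : ∀ i, ∀ᶠ y in Bornology.cobounded (EuclideanSpace ℝ (Fin d)), δ < |gradient g y i|)
    (hc : Tendsto g (Bornology.cobounded (EuclideanSpace ℝ (Fin d))) atTop)
    (hsard : interior (closure {y : ℝ | ∃ x, gradient g x = 0 ∧ g x = y}) = ∅) :
    Tendsto (fun k => ∫ ω, ‖gradient g (x k ω)‖ ^ 2 ∂P) atTop (nhds 0) := by
  obtain ⟨C, hC⟩ := h.exists_integral_norm_gradient_pow_four_le hg hσ₀ hσ₁ hε hd hδ hflat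
  have hb : ∀ k, BoundedMeasurable m0 fun ω => ‖gradient g (x k ω)‖ ^ 2 := fun k =>
    ((h.comp_x k hg.continuous_gradient.norm).pow 2).mono (ℱ.le k)
  refine tendsto_integral_of_ae_tendsto_of_integral_sq_le (C := C)
    (fun k => (memLp_two_iff_integrable_sq (hb k).1.aestronglyMeasurable).2
      ((hb k).pow 2).integrable) (fun k ω => sq_nonneg _) ?_ ?_
  · filter_upwards [h.ae_tendsto_gradient hg hσ₀ hσ₁ hε hSm hS0 hS hδ₀ hsharp hd hδ hflat hc
      hsard] with ω hω
    simpa using hω.norm.pow 2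
  · simpa only [← pow_mul] using hC

end IsPreconditionedSGD

theorem condExp_apply_ae_eq {d : ℕ} {Ω : Type*} {m m0 : MeasurableSpace Ω} {P : Measure Ω}
    {Y : Ω → EuclideanSpace ℝ (Fin d)} (hY : Integrable Y P) (i : Fin d) :
    P[fun ω => Y ω i | m] =ᵐ[P] fun ω => (P[Y | m]) ω i :=
  ((EuclideanSpace.proj (𝕜 := ℝ) i).comp_condExp_comm hY).symm

theorem rmsPreconditioner_mul_eq {ι : Type*} (ε : ℝ) (k : ℕ) (w : ι → ℝ) (i : ι) :
    rmsPreconditioner ε k (fun j => ((k : ℝ) + 1) * w j) i =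
      1 / √((k : ℝ) + 1) / (√(w i) + ε) := by
  rw [rmsPreconditioner, Real.sqrt_mul (by positivity), div_div, mul_add, mul_comm ε]

/-- Mean-square convergence of RMSProp (Theorem 6.6):
`lim_{n→∞} E[‖∇g(θ_n)‖²] = 0`. -/
theorem rmsprop_mean_square_convergence
    {d : ℕ} {Ω : Type*} {m0 : MeasurableSpace Ω} (P : Measure Ω) [IsProbabilityMeasure P]
    (ℱ : Filtration ℕ m0)
    (g : EuclideanSpace ℝ (Fin d) → ℝ)
    (L σ₀ σ₁ v ε β₁ : ℝ)
    (hL : 0 < L) (hσ₀ : 0 ≤ σ₀) (hσ₁ : 0 ≤ σ₁) (hv : 0 < v) (hε : 0 < ε)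
    (hβ₁ : β₁ ∈ Set.Ioo (0 : ℝ) 1)
    (hg_diff : ContDiff ℝ 1 g)
    (hg_nonneg : ∀ x, 0 ≤ g x)
    (hg_smooth : ∀ x y, ‖gradient g x - gradient g y‖ ≤ L * ‖x - y‖)
    (θ₁ : EuclideanSpace ℝ (Fin d))
    (G θ : ℕ → Ω → EuclideanSpace ℝ (Fin d))
    (V : ℕ → Ω → Fin d → ℝ)
    (hG_meas : ∀ n, 1 ≤ n → StronglyMeasurable[ℱ n] (G n))
    (hG_int : ∀ n, 1 ≤ n → Integrable (G n) P)
    (hG_sq_int : ∀ n, 1 ≤ n → Integrable (fun ω => ‖G n ω‖ ^ 2) P)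
    (hθ_adapted : ∀ n, 1 ≤ n → StronglyMeasurable[ℱ (n - 1)] (θ n))
    (hθ_init : ∀ ω, θ 1 ω = θ₁)
    (hV0 : ∀ ω i, V 0 ω i = v)
    (hV1 : ∀ ω i, V 1 ω i = β₁ * v + (1 - β₁) * G 1 ω i ^ 2)
    (hV_rec : ∀ n : ℕ, 2 ≤ n → ∀ ω i,
      V n ω i = (1 - 1 / (n : ℝ)) * V (n - 1) ω i + (1 / (n : ℝ)) * G n ω i ^ 2)
    (hθ_rec : ∀ n : ℕ, 1 ≤ n → ∀ ω (i : Fin d),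
      θ (n + 1) ω i = θ n ω i
        - (1 / Real.sqrt (n : ℝ)) / (Real.sqrt (V n ω i) + ε) * G n ω i)
    (hG_unbiased : ∀ n, 1 ≤ n →
      P[G n | ℱ (n - 1)] =ᵐ[P] fun ω => gradient g (θ n ω))
    (hG_var : ∀ n, 1 ≤ n → ∀ i : Fin d, ∀ᵐ ω ∂P,
      (P[fun ω => G n ω i ^ 2 | ℱ (n - 1)]) ω
        ≤ σ₀ * gradient g (θ n ω) i ^ 2 + σ₁)
    (δt : ℝ) (hδt : 0 < δt)
    (hflat : ∀ i : Fin d, ∀ᶠ x in Bornology.cobounded (EuclideanSpace ℝ (Fin d)),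
      δt < |gradient g x i|)
    (δ₀ δ₁ : ℝ) (hδ₀ : 0 < δ₀) (hδ₁ : 0 < δ₁)
    (hG_sharp : ∀ᵐ ω ∂P, ∀ n : ℕ, 1 ≤ n → ∀ i : Fin d,
      |gradient g (θ n ω) i| ≤ δ₀ → |G n ω i| ≤ δ₁)
    (hg_coercive : Filter.Tendsto g
      (Bornology.cobounded (EuclideanSpace ℝ (Fin d))) Filter.atTop)
    (hg_sard : interior (closure {y : ℝ |
      ∃ x : EuclideanSpace ℝ (Fin d), gradient g x = 0 ∧ g x = y}) = ∅) :
    Filter.Tendsto (fun n : ℕ => ∫ ω, ‖gradient g (θ n ω)‖ ^ 2 ∂P)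
      Filter.atTop (nhds 0) := by
  rcases Nat.eq_zero_or_pos d with rfl | hd
  · simp [Subsingleton.elim _ (0 : EuclideanSpace ℝ (Fin 0))]
  have hg : IsSmoothObjective g L := ⟨hL, hg_diff.differentiable one_ne_zero, hg_nonneg, hg_smooth⟩
  have hGm : ∀ n, 1 ≤ n → ∀ i, StronglyMeasurable[ℱ n] fun ω => G n ω i := fun n hn i =>
    (EuclideanSpace.proj (𝕜 := ℝ) i).continuous.comp_stronglyMeasurable (hG_meas n hn)
  have hrec : ∀ k : ℕ, ∀ ω i, V (k + 2) ω i =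
      (1 - 1 / ((k : ℝ) + 2)) * V (k + 1) ω i + 1 / ((k : ℝ) + 2) * G (k + 2) ω i ^ 2 :=
    fun k ω i => by exact_mod_cast hV_rec (k + 2) (by omega) ω i
  have hVm : ∀ k i, StronglyMeasurable[ℱ (k + 1)] fun ω => V (k + 1) ω i := fun k i => by
    induction k with
    | zero =>
      simp only [zero_add, hV1]
      exact stronglyMeasurable_const.add (((hGm 1 le_rfl i).pow 2).const_mul _)
    | succ k ih =>
      simp only [hrec]
      exact ((ih.mono (ℱ.mono (by omega))).const_mul _).add
        (((hGm (k + 2) (by omega) i).pow 2).const_mul _)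
  have hβ : 0 < 1 - β₁ := sub_pos.2 hβ₁.2
  have hβ' := hβ₁.1
  have hVnn : ∀ k ω i, 0 ≤ V (k + 1) ω i := fun k ω i => by
    induction k with
    | zero =>
      rw [zero_add, hV1]
      positivity
    | succ k ih =>
      rw [hrec]
      have : 0 ≤ 1 - 1 / ((k : ℝ) + 2) :=
        sub_nonneg.2 (div_le_one_of_le₀ (by linarith [k.cast_nonneg (α := ℝ)]) (by positivity))
      positivity
  set S : ℕ → Ω → Fin d → ℝ := fun k ω i => ((k : ℝ) + 1) * V (k + 1) ω i with hSdef
  set X : ℕ → Ω → Fin d → ℝ := fun k ω i => G (k + 2) ω i with hXdef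
  have hS0 : ∀ k ω i, 0 ≤ S k ω i := fun k ω i => mul_nonneg (by positivity) (hVnn k ω i)
  have hS : ∀ k ω i, S (k + 1) ω i = S k ω i + X k ω i ^ 2 := fun k ω i => by
    simp only [hSdef, hXdef, hrec]
    push_cast
    field_simp
    ring
  set 𝒢 : Filtration ℕ m0 := ⟨fun k => ℱ (k + 1), fun a b h => ℱ.mono (by omega),
    fun k => ℱ.le (k + 1)⟩
  have hSm : ∀ k i, StronglyMeasurable[𝒢 k] fun ω => S k ω i := fun k i => (hVm k i).const_mul _
  have hsgd : IsPreconditionedSGD P 𝒢 g σ₀ (σ₁ + 1) ε (fun k => θ (k + 2)) X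
      fun k ω => rmsPreconditioner ε k (S k ω) :=
    { x_meas := fun k => hθ_adapted (k + 2) (by omega)
      A_meas := fun k i => by
        have h1 := (hSm k i).measurable
        refine Measurable.stronglyMeasurable ?_
        unfold rmsPreconditioner
        exact ((h1.sqrt).add_const _).const_div _
      X_meas := fun k i => hGm (k + 2) (by omega) i
      X_sq_int := fun k i => by
        refine (hG_sq_int (k + 2) (by omega)).mono'
          (((hGm (k + 2) (by omega) i).mono (ℱ.le _)).pow 2).aestronglyMeasurable
          (Eventually.of_forall fun ω => ?_)
        rw [Real.norm_of_nonneg (sq_nonneg _), ← sq_abs]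
        exact pow_le_pow_left₀ (abs_nonneg _) (by simpa using PiLp.norm_apply_le (G (k + 2) ω) i) 2
      A_nonneg := fun k ω i => rmsPreconditioner_nonneg hε k
      A_le := fun k ω i => rmsPreconditioner_le hε k
      A_succ_le := fun k ω i => rmsPreconditioner_succ_le hε k
        (by rw [hS]; exact le_add_of_nonneg_right (sq_nonneg _))
      step_le := fun k ω i => abs_rmsPreconditioner_mul_le_one hε (k + 1)
        (by rw [hS]; exact le_add_of_nonneg_left (hS0 k ω i))
      x_succ := fun k ω i => by
        rw [rmsPreconditioner_mul_eq, hθ_rec (k + 2) (by omega)]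
        push_cast
        rw [add_assoc (k : ℝ) 1 1, one_add_one_eq_two]
      x_zero_bdd := by
        refine ⟨‖θ₁‖ + √(d * (1 / (1 - β₁))), fun ω => ?_⟩
        have h1 : ‖θ 2 ω - θ 1 ω‖ ≤ √(d * (1 / (1 - β₁))) := by
          apply Real.le_sqrt_of_sq_le
          rw [norm_sub_sq_eq_of_preconditioned_step (hθ_rec 1 le_rfl ω)]
          refine (Finset.sum_le_card_nsmul _ _ (1 / (1 - β₁)) fun i _ => ?_).trans (by simp)
          rw [Nat.cast_one, Real.sqrt_one, div_one, one_div_mul_eq_div, div_pow]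
          have h2 : (1 - β₁) * G 1 ω i ^ 2 ≤ (√(V 1 ω i) + ε) ^ 2 := by
            have h3 : V 1 ω i ≤ (√(V 1 ω i) + ε) ^ 2 :=
              Real.sqrt_le_left (by positivity) |>.1 (le_add_of_nonneg_right hε.le)
            refine le_trans ?_ h3
            rw [hV1]
            exact le_add_of_nonneg_left (by positivity)
          rw [div_le_div_iff₀ (by positivity) hβ]
          linarith
        have h4 := norm_add_le (θ 1 ω) (θ 2 ω - θ 1 ω)
        rw [add_sub_cancel, hθ_init] at h4
        rw [hθ_init] at h1
        exact h4.trans (add_le_add_right h1 _)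
      unbiased := fun k i => by
        refine (condExp_apply_ae_eq (hG_int (k + 2) (by omega)) i).trans ?_
        filter_upwards [hG_unbiased (k + 2) (by omega)] with ω hω
        exact congrArg (fun y : EuclideanSpace ℝ (Fin d) => y i) hω
      second_moment := fun k i => by
        filter_upwards [hG_var (k + 2) (by omega) i] with ω hω
        exact hω.trans (by linarith) }
  refine (tendsto_add_atTop_iff_nat 2).1 (hsgd.tendsto_integral_norm_gradient_sq hg hσ₀
    (by positivity) hε hSm hS0 hS hδ₀ (δ₁ := δ₁) ?_ hd hδt hflat hg_coercive hg_sard)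
  filter_upwards [hG_sharp] with ω hω k i
  exact hω (k + 2) (by omega) i
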